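/- arXiv:1301.3552 — 2 statements merged into one kernel-verified Lean document; each statement's English description precedes it below -/
import Mathlib

section
/- Let (A,B,C,0) be a minimal state-space realization of the strictly proper m×m transfer function R(s) = C(sI − A)⁻¹B. Then the system is negative imaginary if and only if: (a) 0 is not an eigenvalue of A, and (b) F(s) := s·R(s) is positive real, i.e., A has no eigenvalue with positive real part and F(s) + F(s)ᴴ ⪰ 0 for every s ∈ ℂ with Re(s) > 0. -/
open Matrix Filter Topology ComplexOrder

/-- The (complex) eigenvalues of a real square matrix. -/
noncomputable def eigs {k : Type*} [Fintype k] [DecidableEq k] (A : Matrix k k ℝ) : Set ℂ :=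
  spectrum ℂ (A.map Complex.ofReal)

/-- A real square matrix is Hurwitz if all of its (complex) eigenvalues have negative real
part. -/
noncomputable def IsHurwitz {k : Type*} [Fintype k] [DecidableEq k] (A : Matrix k k ℝ) : Prop :=
  ∀ μ ∈ eigs A, μ.re < 0

/-- Transfer function `R(s) = C (sI - A)⁻¹ B + D` of a real state-space system, as a
complex matrix. -/
noncomputable def tf {n m : ℕ} (A : Matrix (Fin n) (Fin n) ℝ) (B : Matrix (Fin n) (Fin m) ℝ)
    (C : Matrix (Fin m) (Fin n) ℝ) (D : Matrix (Fin m) (Fin m) ℝ) (s : ℂ) :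
    Matrix (Fin m) (Fin m) ℂ :=
  C.map (Complex.ofReal) * (s • (1 : Matrix (Fin n) (Fin n) ℂ) - A.map Complex.ofReal)⁻¹ *
      B.map Complex.ofReal + D.map Complex.ofReal

/-- A state-space realization `(A,B,C,D)` is minimal if the controllability matrix and the
observability matrix both have rank `n`. -/
def IsMinimal {n m : ℕ} (A : Matrix (Fin n) (Fin n) ℝ) (B : Matrix (Fin n) (Fin m) ℝ)
    (C : Matrix (Fin m) (Fin n) ℝ) : Prop :=
  (Matrix.of fun (i : Fin n) (p : Fin n × Fin m) => (A ^ (p.1 : ℕ) * B) i p.2).rank = n ∧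
  (Matrix.of fun (p : Fin n × Fin m) (i : Fin n) => (C * A ^ (p.1 : ℕ)) p.2 i).rank = n

/-- The system `(A,B,C,D)` is negative imaginary (NI). -/
noncomputable def IsNI {n m : ℕ} (A : Matrix (Fin n) (Fin n) ℝ) (B : Matrix (Fin n) (Fin m) ℝ)
    (C : Matrix (Fin m) (Fin n) ℝ) (D : Matrix (Fin m) (Fin m) ℝ) : Prop :=
  (∀ μ ∈ eigs A, μ ≠ 0 ∧ μ.re ≤ 0) ∧
  (∀ ω : ℝ, 0 < ω → (Complex.I * ω) ∉ eigs A →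
    (Complex.I • (tf A B C D (Complex.I * ω) - (tf A B C D (Complex.I * ω))ᴴ)).PosSemidef) ∧
  (∀ ω : ℝ, 0 < ω → (Complex.I * ω) ∈ eigs A →
    ∃ K : Matrix (Fin m) (Fin m) ℂ,
      Tendsto (fun s : ℂ => (s - Complex.I * ω) • Complex.I • tf A B C D s)
        (𝓝[≠] (Complex.I * ω)) (𝓝 K) ∧ K.PosSemidef)

/-- The system `(A,B,C,D)` is strictly negative imaginary (SNI). -/
noncomputable def IsSNI {n m : ℕ} (A : Matrix (Fin n) (Fin n) ℝ) (B : Matrix (Fin n) (Fin m) ℝ)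
    (C : Matrix (Fin m) (Fin n) ℝ) (D : Matrix (Fin m) (Fin m) ℝ) : Prop :=
  IsHurwitz A ∧
  (∀ ω : ℝ, 0 < ω →
    (Complex.I • (tf A B C D (Complex.I * ω) - (tf A B C D (Complex.I * ω))ᴴ)).PosDef)


theorem pr_base (f : ℂ → ℂ) (hd : ∀ s : ℂ, 0 ≤ s.re → DifferentiableAt ℂ f s)
    (hb : ∀ s : ℂ, s.re = 0 → 0 ≤ (f s).re)
    (hinf : ∃ M R : ℝ, ∀ s : ℂ, R ≤ ‖s‖ → ‖f s‖ ≤ M) (s : ℂ) (hs : 0 ≤ s.re) :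
    0 ≤ (f s).re := by
  obtain ⟨M, R, hM⟩ := hinf
  have hn : ∀ z : ℂ, ‖Complex.exp (-f z)‖ = Real.exp (-(f z).re) := by
    intro z; simp [Complex.norm_exp]
  have hbd : ∀ z : ℂ, R ≤ ‖z‖ → ‖Complex.exp (-f z)‖ ≤ Real.exp M := by
    intro z hz
    rw [hn]
    apply Real.exp_le_exp.2
    have h1 := Complex.abs_re_le_norm (f z)
    have h2 := abs_le.1 h1
    linarith [hM z hz]
  have key := PhragmenLindelof.right_half_plane_of_bounded_on_real (f := fun z => Complex.exp (-f z))
    (C := 1) (z := s) ?_ ?_ ?_ ?_ hs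
  · simp only [hn] at key
    have := Real.exp_le_one_iff.1 key
    linarith
  · apply DifferentiableOn.diffContOnCl
    intro z hz
    have hz' : 0 ≤ z.re := by
      have : closure {z : ℂ | 0 < z.re} ⊆ {z : ℂ | 0 ≤ z.re} :=
        closure_minimal (fun z (hz : 0 < z.re) => (hz.le : 0 ≤ z.re)) (isClosed_le continuous_const Complex.continuous_re)
      exact this hz
    exact ((hd z hz').neg.cexp).differentiableWithinAt
  · refine ⟨1, by norm_num, 0, ?_⟩
    apply Asymptotics.IsBigO.of_bound (Real.exp M)
    have : ∀ᶠ z in Bornology.cobounded ℂ, R ≤ ‖z‖ :=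
      tendsto_norm_cobounded_atTop.eventually (eventually_ge_atTop R)
    filter_upwards [this.filter_mono inf_le_left] with z hz
    simpa using hbd z hz
  · refine ⟨Real.exp M, ?_⟩
    rw [eventually_map]
    filter_upwards [eventually_ge_atTop R] with x hx
    apply hbd
    simp only [Complex.norm_real, Real.norm_eq_abs]
    exact hx.trans (le_abs_self x)
  · intro x
    simp only [hn]
    apply Real.exp_le_one_iff.2
    have := hb (x * Complex.I) (by simp)
    linarith

theorem pr_main (U : Set ℂ) (hU : IsOpen U) (hUs : ∀ s : ℂ, 0 ≤ s.re → s ∈ U) (S : Finset ℂ) :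
    ∀ (f : ℂ → ℂ), (∀ s ∈ U, s ∉ S → DifferentiableAt ℂ f s) →
    (∀ p ∈ S, p.re = 0 ∧ ∃ r : ℝ, 0 ≤ r ∧
      Tendsto (fun s => (s - p) * f s) (𝓝[≠] p) (𝓝 (r : ℂ))) →
    (∀ s : ℂ, s.re = 0 → s ∉ S → 0 ≤ (f s).re) →
    (∃ M R : ℝ, ∀ s : ℂ, R ≤ ‖s‖ → ‖f s‖ ≤ M) →
    ∀ s : ℂ, 0 < s.re → 0 ≤ (f s).re := by
  induction S using Finset.induction_on with
  | empty =>
    intro f hd _ hb hinf s hs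
    exact pr_base f (fun s hs => hd s (hUs s hs) (by simp)) (fun s hs => hb s hs (by simp)) hinf s hs.le
  | insert p S hpS ih =>
    intro f hd hp hb hinf s hs
    obtain ⟨hp0, r, hr, hlim⟩ := hp p (by simp)
    set g : ℂ → ℂ := fun s => f s - r / (s - p) with hg
    have hpU : p ∈ U := hUs p hp0.ge
    have hgd : ∀ z ∈ U, z ∉ S → z ≠ p → DifferentiableAt ℂ g z := by
      intro z hz hzS hzp
      have h1 := hd z hz (by simp [hzS, hzp])
      have h2 : z - p ≠ 0 := sub_ne_zero.2 hzp
      exact h1.sub ((differentiableAt_const _).div (differentiableAt_id.sub_const p) h2)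
    set V : Set ℂ := U ∩ (S : Set ℂ)ᶜ with hV
    have hVo : IsOpen V := hU.inter S.finite_toSet.isClosed.isOpen_compl
    have hpV : V ∈ 𝓝 p := hVo.mem_nhds ⟨hpU, by simpa using hpS⟩
    have hglim : Tendsto (fun z => (z - p) * g z) (𝓝[≠] p) (𝓝 0) := by
      have h1 : Tendsto (fun z => (z - p) * f z - r) (𝓝[≠] p) (𝓝 0) := by
        simpa using hlim.sub_const (r : ℂ)
      refine h1.congr' ?_
      filter_upwards [self_mem_nhdsWithin] with z hz
      have h2 : z - p ≠ 0 := sub_ne_zero.2 hz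
      simp only [hg]
      field_simp
    have hlo : (fun z => g z - g p) =o[𝓝[≠] p] fun z => (z - p)⁻¹ := by
      rw [Asymptotics.isLittleO_iff_tendsto']
      · have h1 : Tendsto (fun z : ℂ => (z - p) * g p) (𝓝[≠] p) (𝓝 0) := by
          have : Tendsto (fun z : ℂ => (z - p) * g p) (𝓝 p) (𝓝 ((p - p) * g p)) :=
            (by fun_prop : Continuous fun z : ℂ => (z - p) * g p).tendsto p
          simpa using this.mono_left nhdsWithin_le_nhds
        have h2 := hglim.sub h1
        simp only [sub_zero] at h2
        refine h2.congr fun z => ?_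
        rw [div_inv_eq_mul]; ring
      · filter_upwards [self_mem_nhdsWithin] with z hz h0
        exact absurd (inv_eq_zero.1 h0) (sub_ne_zero.2 hz)
    have hdV := Complex.differentiableOn_update_limUnder_of_isLittleO hpV
      (fun z hz => (hgd z hz.1.1 (by simpa using hz.1.2) hz.2).differentiableWithinAt) hlo
    set h := Function.update g p (limUnder (𝓝[≠] p) g) with hh
    have hne : ∀ z, z ≠ p → h z = g z := fun z hz => by simp [hh, hz]
    have hhd : ∀ z ∈ U, z ∉ S → DifferentiableAt ℂ h z := fun z hz hzS =>
      hdV.differentiableAt (hVo.mem_nhds ⟨hz, by simpa using hzS⟩)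
    have hre0 : ∀ z : ℂ, z.re = 0 → ((r : ℂ) / (z - p)).re = 0 := by
      intro z hz
      simp [Complex.div_re, hz, hp0]
    have hev : ∀ q : ℂ, ∀ᶠ z in 𝓝[≠] q, z ≠ p := by
      intro q
      by_cases hq : q = p
      · subst hq; exact self_mem_nhdsWithin
      · exact nhdsWithin_le_nhds (isOpen_ne.mem_nhds hq)
    have hbh : ∀ z : ℂ, z.re = 0 → z ∉ S → z ≠ p → 0 ≤ (h z).re := by
      intro z hz hzS hzp
      rw [hne z hzp]
      simp only [hg, Complex.sub_re, hre0 z hz, sub_zero]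
      exact hb z hz (by simp [hzS, hzp])
    have := ih h hhd ?_ ?_ ?_ s hs
    · have hsp : s ≠ p := by rintro rfl; linarith
      rw [hne s hsp] at this
      simp only [hg, Complex.sub_re] at this
      have h3 : 0 ≤ ((r : ℂ) / (s - p)).re := by
        simp only [Complex.div_re, Complex.ofReal_re, Complex.ofReal_im, zero_mul, zero_div, add_zero,
          Complex.sub_re, hp0, sub_zero]
        exact div_nonneg (mul_nonneg hr hs.le) (Complex.normSq_nonneg _)
      linarith
    · intro q hq
      obtain ⟨hq0, t, ht, hqlim⟩ := hp q (by simp [hq])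
      refine ⟨hq0, t, ht, ?_⟩
      have hqp : q ≠ p := by rintro rfl; exact hpS hq
      have h1 : Tendsto (fun z => (z - q) * (r / (z - p))) (𝓝[≠] q) (𝓝 0) := by
        have : ContinuousAt (fun z : ℂ => (z - q) * (r / (z - p))) q := by
          apply ContinuousAt.mul (by fun_prop)
          exact ContinuousAt.div (by fun_prop) (by fun_prop) (sub_ne_zero.2 hqp)
        have := this.tendsto
        simp only [sub_self, zero_mul] at this
        exact this.mono_left nhdsWithin_le_nhds
      have h2 := hqlim.sub h1
      rw [sub_zero] at h2
      refine h2.congr' ?_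
      filter_upwards [hev q] with z hz
      rw [hne z hz]; simp only [hg]; ring
    · intro z hz hzS
      by_cases hzp : z = p
      · subst hzp
        have hc : ContinuousAt h z := (hhd z hpU hpS).continuousAt
        have ht : Tendsto (fun x : ℝ => z + x * Complex.I) (𝓝[≠] 0) (𝓝 z) := by
          have : Tendsto (fun x : ℝ => z + x * Complex.I) (𝓝 0) (𝓝 (z + (0:ℝ) * Complex.I)) :=
            (by fun_prop : Continuous (fun x : ℝ => z + x * Complex.I)).tendsto 0
          simp only [Complex.ofReal_zero, zero_mul, add_zero] at this
          exact this.mono_left nhdsWithin_le_nhds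
        have h1 : Tendsto (fun x : ℝ => (h (z + x * Complex.I)).re) (𝓝[≠] 0) (𝓝 (h z).re) :=
          (Complex.continuous_re.tendsto _).comp (hc.tendsto.comp ht)
        refine ge_of_tendsto h1 ?_
        filter_upwards [ht.eventually hpV, self_mem_nhdsWithin] with x hx hx0
        apply hbh _ (by simp [hz]) (by simpa using hx.2)
        simpa using hx0
      · exact hbh z hz hzS hzp
    · obtain ⟨M, R, hM⟩ := hinf
      refine ⟨M + r, max R (‖p‖ + 1), fun z hz => ?_⟩
      have hz1 : R ≤ ‖z‖ := (le_max_left _ _).trans hz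
      have hz2 : ‖p‖ + 1 ≤ ‖z‖ := (le_max_right _ _).trans hz
      have h1 : 1 ≤ ‖z - p‖ := by have := norm_sub_norm_le z p; linarith
      have hzp : z ≠ p := by rintro rfl; linarith
      rw [hne z hzp]
      refine (norm_sub_le _ _).trans (add_le_add (hM z hz1) ?_)
      rw [norm_div, Complex.norm_real, Real.norm_of_nonneg hr]
      exact div_le_self hr h1

/-- Nonnegativity on the right half plane forces at most a simple pole with nonnegative residue. -/
theorem pr_pole (f : ℂ → ℂ) (p : ℂ) (hp : p.re = 0) (hf : MeromorphicAt f p)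
    (hpos : ∀ s : ℂ, 0 < s.re → 0 ≤ (f s).re) :
    ∃ r : ℝ, 0 ≤ r ∧ Tendsto (fun s => (s - p) * f s) (𝓝[≠] p) (𝓝 (r : ℂ)) := by
  by_cases htop : meromorphicOrderAt f p = ⊤
  · rw [meromorphicOrderAt_eq_top_iff] at htop
    refine ⟨0, le_rfl, ?_⟩
    rw [Complex.ofReal_zero]
    refine tendsto_const_nhds.congr' ?_
    filter_upwards [htop] with z hz
    simp [hz]
  obtain ⟨n, hn⟩ := WithTop.ne_top_iff_exists.1 htop
  obtain ⟨g, hg, hg0, hfg⟩ := (meromorphicOrderAt_eq_int_iff hf).1 hn.symm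
  have hgl : Tendsto g (𝓝[≠] p) (𝓝 (g p)) := hg.continuousAt.tendsto.mono_left nhdsWithin_le_nhds
  have hsub : Tendsto (fun z : ℂ => z - p) (𝓝[≠] p) (𝓝 0) := by
    have : Tendsto (fun z : ℂ => z - p) (𝓝 p) (𝓝 (p - p)) :=
      (by fun_prop : Continuous fun z : ℂ => z - p).tendsto p
    rw [sub_self] at this
    exact this.mono_left nhdsWithin_le_nhds
  by_cases hn0 : 0 ≤ n
  · refine ⟨0, le_rfl, ?_⟩
    lift n to ℕ using hn0
    have h1 : Tendsto (fun z => (z - p) * ((z - p) ^ n * g z)) (𝓝[≠] p) (𝓝 (0 * (0 ^ n * g p))) :=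
      hsub.mul ((hsub.pow n).mul hgl)
    rw [zero_mul] at h1
    rw [Complex.ofReal_zero]
    refine h1.congr' ?_
    filter_upwards [hfg] with z hz
    rw [hz]; simp
  push Not at hn0
  obtain ⟨k, rfl⟩ : ∃ k : ℕ, n = -(k : ℤ) - 1 := ⟨(-n - 1).toNat, by omega⟩
  -- the direction inequality
  have hdir : ∀ u : ℂ, 0 < u.re → 0 ≤ (g p * (u ^ (k + 1))⁻¹).re := by
    intro u hu
    have hu0 : u ≠ 0 := by rintro rfl; simp at hu
    have ht : Tendsto (fun x : ℝ => p + x * u) (𝓝[>] 0) (𝓝[≠] p) := by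
      apply tendsto_nhdsWithin_iff.2
      constructor
      · have : Tendsto (fun x : ℝ => p + x * u) (𝓝 0) (𝓝 (p + (0:ℝ) * u)) :=
          (by fun_prop : Continuous (fun x : ℝ => p + x * u)).tendsto 0
        simp only [Complex.ofReal_zero, zero_mul, add_zero] at this
        exact this.mono_left nhdsWithin_le_nhds
      · filter_upwards [self_mem_nhdsWithin] with x hx
        have : x ≠ 0 := ne_of_gt hx
        simp [this, hu0]
    have h1 : Tendsto (fun x : ℝ => (g (p + x * u) * (u ^ (k + 1))⁻¹).re) (𝓝[>] 0)
        (𝓝 (g p * (u ^ (k + 1))⁻¹).re) :=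
      (Complex.continuous_re.tendsto _).comp ((hgl.comp ht).mul_const _)
    refine ge_of_tendsto h1 ?_
    filter_upwards [ht.eventually hfg, self_mem_nhdsWithin] with x hx hx0
    have hx0' : (0:ℝ) < x := hx0
    have hpo := hpos (p + x * u) (by simp [hp]; positivity)
    rw [hx] at hpo
    have hxc : (x : ℂ) ≠ 0 := by exact_mod_cast hx0'.ne'
    have heq : g (p + x * u) * (u ^ (k + 1))⁻¹ =
        ((x ^ (k + 1) : ℝ) : ℂ) * ((p + x * u - p) ^ (-(k : ℤ) - 1) • g (p + x * u)) := by
      have : (p + x * u - p) ^ (-(k : ℤ) - 1) = ((x * u) ^ (k + 1))⁻¹ := by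
        rw [add_sub_cancel_left, ← zpow_natCast, ← _root_.zpow_neg]; congr 1; push_cast; ring
      rw [this, smul_eq_mul, mul_pow]
      push_cast
      field_simp
    rw [heq, Complex.re_ofReal_mul]
    positivity
  have hdir' : ∀ u : ℂ, 0 ≤ u.re → u ≠ 0 → 0 ≤ (g p * (u ^ (k + 1))⁻¹).re := by
    intro u hu hu0
    have hc : ContinuousAt (fun x : ℝ => (g p * ((u + x) ^ (k + 1))⁻¹).re) 0 := by
      apply Complex.continuous_re.continuousAt.comp
      apply ContinuousAt.mul continuousAt_const
      apply ContinuousAt.inv₀ (by fun_prop)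
      simpa using hu0
    have h1 := hc.tendsto.mono_left (nhdsWithin_le_nhds (s := Set.Ioi 0))
    simp only [Complex.ofReal_zero, add_zero] at h1
    refine ge_of_tendsto h1 ?_
    filter_upwards [self_mem_nhdsWithin] with x hx
    apply hdir
    have hx' : (0:ℝ) < x := hx
    simp; linarith
  rcases Nat.eq_zero_or_pos k with rfl | hk
  · have h1 := hdir' 1 (by simp) (by simp)
    have h2 := hdir' Complex.I (by simp) (by simp)
    have h3 := hdir' (-Complex.I) (by simp) (by simp)
    simp at h1 h2 h3
    have him : (g p).im = 0 := le_antisymm h3 h2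
    refine ⟨(g p).re, h1, ?_⟩
    have : (((g p).re : ℝ) : ℂ) = g p := Complex.ext (by simp) (by simp [him])
    rw [this]
    refine hgl.congr' ?_
    filter_upwards [hfg, self_mem_nhdsWithin] with z hz hzp
    have : z - p ≠ 0 := sub_ne_zero.2 hzp
    rw [hz]
    simp [this]
  · exfalso
    have hex : ∃ θ : ℝ, |θ| ≤ Real.pi / 2 ∧
        g p * (Complex.exp (θ * Complex.I) ^ (k + 1))⁻¹ = -(‖g p‖ : ℂ) := by
      have hpi := Real.pi_pos
      have hk2 : (2:ℝ) ≤ (k + 1 : ℕ) := by exact_mod_cast (by omega : 2 ≤ k + 1)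
      have hk0 : (0:ℝ) < (k + 1 : ℕ) := by linarith
      have main : ∀ σ : ℝ, |σ| ≤ Real.pi → Complex.exp (((g p).arg - σ : ℝ) * Complex.I) = -1 →
          ∃ θ : ℝ, |θ| ≤ Real.pi / 2 ∧
          g p * (Complex.exp (θ * Complex.I) ^ (k + 1))⁻¹ = -(‖g p‖ : ℂ) := by
        intro σ hσ he
        refine ⟨σ / (k + 1 : ℕ), ?_, ?_⟩
        · rw [abs_div, abs_of_pos hk0]
          apply div_le_div₀ <;> linarith
        · have : Complex.exp (((σ / (k + 1 : ℕ) : ℝ) : ℂ) * Complex.I) ^ (k + 1)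
              = Complex.exp (σ * Complex.I) := by
            rw [← Complex.exp_nat_mul]
            congr 1
            have : ((k + 1 : ℕ) : ℂ) ≠ 0 := by exact_mod_cast Nat.succ_ne_zero k
            rw [Complex.ofReal_div, Complex.ofReal_natCast]
            field_simp
          rw [this, ← Complex.exp_neg]
          nth_rewrite 1 [← Complex.norm_mul_exp_arg_mul_I (g p)]
          rw [mul_assoc, ← Complex.exp_add]
          have h4 : ((g p).arg : ℂ) * Complex.I + -(σ * Complex.I) = ((g p).arg - σ : ℝ) * Complex.I := by
            push_cast; ring
          rw [h4, he]; ring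
      have ha1 := Complex.neg_pi_lt_arg (g p)
      have ha2 := Complex.arg_le_pi (g p)
      rcases le_total 0 (g p).arg with h | h
      · apply main ((g p).arg - Real.pi)
        · rw [abs_le]; constructor <;> linarith
        · rw [sub_sub_cancel, Complex.exp_pi_mul_I]
      · apply main ((g p).arg + Real.pi)
        · rw [abs_le]; constructor <;> linarith
        · rw [sub_add_cancel_left]; push_cast
          rw [neg_mul, Complex.exp_neg, Complex.exp_pi_mul_I]; norm_num
    obtain ⟨θ, hθ, he⟩ := hex
    have h1 := hdir' (Complex.exp (θ * Complex.I)) ?_ (Complex.exp_ne_zero _)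
    · rw [he] at h1
      simp at h1
      exact hg0 h1
    · rw [Complex.exp_ofReal_mul_I_re]
      have := abs_le.1 hθ
      exact Real.cos_nonneg_of_neg_pi_div_two_le_of_le (by linarith) (by linarith)

/-- The quadratic form of a complex matrix. -/
noncomputable def qf {m : ℕ} (M : Matrix (Fin m) (Fin m) ℂ) (x : Fin m → ℂ) : ℂ :=
  star x ⬝ᵥ (M *ᵥ x)

theorem qf_sum {m : ℕ} (M : Matrix (Fin m) (Fin m) ℂ) (x : Fin m → ℂ) :
    qf M x = ∑ i, ∑ j, star (x i) * M i j * x j := by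
  simp [qf, dotProduct, mulVec, Finset.mul_sum, mul_assoc]

theorem qf_smul {m : ℕ} (c : ℂ) (M : Matrix (Fin m) (Fin m) ℂ) (x : Fin m → ℂ) :
    qf (c • M) x = c * qf M x := by
  simp [qf, smul_mulVec]

theorem qf_add {m : ℕ} (M N : Matrix (Fin m) (Fin m) ℂ) (x : Fin m → ℂ) :
    qf (M + N) x = qf M x + qf N x := by
  simp [qf, add_mulVec]

theorem qf_conjTranspose {m : ℕ} (M : Matrix (Fin m) (Fin m) ℂ) (x : Fin m → ℂ) :
    qf Mᴴ x = star (qf M x) := by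
  rw [qf_sum, qf_sum, star_sum, Finset.sum_comm]
  refine Finset.sum_congr rfl fun i _ => ?_
  rw [star_sum]
  refine Finset.sum_congr rfl fun j _ => ?_
  simp [conjTranspose_apply]; ring

theorem qf_map_conj {m : ℕ} (M : Matrix (Fin m) (Fin m) ℂ) (x : Fin m → ℂ) :
    qf (M.map (starRingEnd ℂ)) x = star (qf M (star x)) := by
  rw [qf_sum, qf_sum, star_sum]
  refine Finset.sum_congr rfl fun i _ => ?_
  rw [star_sum]
  refine Finset.sum_congr rfl fun j _ => ?_
  simp

theorem psd_add_iff {m : ℕ} (M : Matrix (Fin m) (Fin m) ℂ) :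
    (M + Mᴴ).PosSemidef ↔ ∀ x, 0 ≤ (qf M x).re := by
  have key : ∀ x, qf (M + Mᴴ) x = ((2 * (qf M x).re : ℝ) : ℂ) := by
    intro x
    rw [qf_add, qf_conjTranspose]
    apply Complex.ext <;> simp
    ring
  rw [posSemidef_iff_dotProduct_mulVec]
  constructor
  · rintro ⟨-, h⟩ x
    have h1 : 0 ≤ qf (M + Mᴴ) x := h x
    rw [key, Complex.zero_le_real] at h1
    linarith
  · intro h
    refine ⟨?_, fun x => ?_⟩
    · simp [IsHermitian, add_comm]
    · change 0 ≤ qf (M + Mᴴ) x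
      rw [key, Complex.zero_le_real]
      linarith [h x]

theorem qf_add_vec {m : ℕ} (M : Matrix (Fin m) (Fin m) ℂ) (i j : Fin m) (c : ℂ) :
    qf M (Pi.single i 1 + c • Pi.single j 1) =
      M i i + c * M i j + star c * M j i + star c * c * M j j := by
  have h1 : ∀ v : Fin m → ℂ, ∀ k, v ⬝ᵥ (M *ᵥ Pi.single k 1) = ∑ l, v l * M l k := by
    intro v k; simp [dotProduct]
  have hs : ∀ k : Fin m, star (Pi.single k (1 : ℂ) : Fin m → ℂ) = Pi.single k 1 := by
    intro k; rw [← Pi.single_star]; simp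
  simp only [qf, star_add, star_smul, hs, mulVec_add, mulVec_smul, dotProduct_add,
    dotProduct_smul, h1]
  simp [Pi.single_apply, add_mul, Finset.sum_add_distrib]
  ring

theorem polar {m : ℕ} (M : Matrix (Fin m) (Fin m) ℂ) (i j : Fin m) :
    M i j = (1 / 4) * (qf M (Pi.single i 1 + (1 : ℂ) • Pi.single j 1)
      - qf M (Pi.single i 1 + (-1 : ℂ) • Pi.single j 1)
      - Complex.I * qf M (Pi.single i 1 + Complex.I • Pi.single j 1)
      + Complex.I * qf M (Pi.single i 1 + (-Complex.I) • Pi.single j 1)) := by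
  simp only [qf_add_vec]
  have h := Complex.I_sq
  simp
  linear_combination ((1/2) * (M i j) - (1/2) * M j i) * h

theorem psd_of_qf {m : ℕ} (M : Matrix (Fin m) (Fin m) ℂ)
    (h : ∀ x, ∃ r : ℝ, 0 ≤ r ∧ qf M x = r) : M.PosSemidef := by
  rw [posSemidef_iff_dotProduct_mulVec]
  refine ⟨?_, fun x => ?_⟩
  · have : ∀ x, qf Mᴴ x = qf M x := by
      intro x
      obtain ⟨r, -, hr⟩ := h x
      rw [qf_conjTranspose, hr]; simp
    ext i j
    rw [polar Mᴴ, polar M]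
    simp only [this]
  · obtain ⟨r, hr0, hr⟩ := h x
    change 0 ≤ qf M x
    rw [hr, Complex.zero_le_real]; exact hr0

theorem continuous_qf {m : ℕ} (x : Fin m → ℂ) :
    Continuous fun M : Matrix (Fin m) (Fin m) ℂ => qf M x := by
  unfold qf; fun_prop

theorem tendsto_of_qf {m : ℕ} (F : ℂ → Matrix (Fin m) (Fin m) ℂ) (l : Filter ℂ) [l.NeBot]
    (h : ∀ x, ∃ r : ℝ, 0 ≤ r ∧ Tendsto (fun s => qf (F s) x) l (𝓝 (r : ℂ))) :
    ∃ K : Matrix (Fin m) (Fin m) ℂ, Tendsto F l (𝓝 K) ∧ K.PosSemidef := by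
  choose r hr0 hr using h
  let K : Matrix (Fin m) (Fin m) ℂ := Matrix.of fun i j => (1 / 4 : ℂ) *
    ((r (Pi.single i 1 + (1 : ℂ) • Pi.single j 1) : ℂ)
      - r (Pi.single i 1 + (-1 : ℂ) • Pi.single j 1)
      - Complex.I * r (Pi.single i 1 + Complex.I • Pi.single j 1)
      + Complex.I * r (Pi.single i 1 + (-Complex.I) • Pi.single j 1))
  have hK : Tendsto F l (𝓝 K) := by
    refine tendsto_pi_nhds.2 fun i => tendsto_pi_nhds.2 fun j => ?_
    have h1 : ∀ s, F s i j = _ := fun s => polar (F s) i j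
    simp only [h1]
    exact ((((hr _).sub (hr _)).sub ((hr _).const_mul _)).add ((hr _).const_mul _)).const_mul _
  refine ⟨K, hK, psd_of_qf K fun x => ⟨r x, hr0 x, ?_⟩⟩
  exact tendsto_nhds_unique (((continuous_qf x).tendsto K).comp hK) (hr x)

theorem diff_det {k : ℕ} (M : ℂ → Matrix (Fin k) (Fin k) ℂ)
    (h : ∀ i j, Differentiable ℂ fun s => M s i j) : Differentiable ℂ fun s => (M s).det := by
  simp only [det_apply]
  refine Differentiable.fun_sum fun σ _ => ?_
  refine Differentiable.fun_const_smul ?_ _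
  exact Differentiable.fun_finsetProd fun i _ => h _ _

theorem diff_adj {k : ℕ} (M : ℂ → Matrix (Fin k) (Fin k) ℂ)
    (h : ∀ i j, Differentiable ℂ fun s => M s i j) (i j : Fin k) :
    Differentiable ℂ fun s => (M s).adjugate i j := by
  simp only [adjugate_apply]
  apply diff_det
  intro a b
  by_cases hab : a = j
  · subst hab; simp
  · simp [updateRow_apply, hab, h]

section
variable {n m : ℕ} (A : Matrix (Fin n) (Fin n) ℝ) (B : Matrix (Fin n) (Fin m) ℝ)
    (C : Matrix (Fin m) (Fin n) ℝ)

theorem mem_eigs_iff (s : ℂ) :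
    s ∈ eigs A ↔ (s • (1 : Matrix (Fin n) (Fin n) ℂ) - A.map Complex.ofReal).det = 0 := by
  unfold eigs
  rw [spectrum.mem_iff, Algebra.algebraMap_eq_smul_one, isUnit_iff_isUnit_det, isUnit_iff_ne_zero,
    not_not]

theorem tf_rational (x : Fin m → ℂ) : ∃ q N : ℂ → ℂ, Differentiable ℂ q ∧ Differentiable ℂ N ∧
    (∀ s, qf (tf A B C 0 s) x = (q s)⁻¹ * N s) ∧ ∀ s, s ∈ eigs A ↔ q s = 0 := by
  have hM : ∀ i j, Differentiable ℂ fun s : ℂ =>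
      (s • (1 : Matrix (Fin n) (Fin n) ℂ) - A.map Complex.ofReal) i j := by
    intro i j
    simp only [Matrix.sub_apply, Matrix.smul_apply]
    fun_prop
  refine ⟨fun s => (s • (1 : Matrix (Fin n) (Fin n) ℂ) - A.map Complex.ofReal).det,
    fun s => qf (C.map (Complex.ofReal) *
      (s • (1 : Matrix (Fin n) (Fin n) ℂ) - A.map Complex.ofReal).adjugate *
      B.map Complex.ofReal) x, diff_det _ hM, ?_, ?_, mem_eigs_iff A⟩
  · simp only [qf_sum, mul_apply]
    have := diff_adj _ hM
    fun_prop
  · intro s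
    rw [← qf_smul]
    congr 1
    simp [tf, inv_def, Ring.inverse_eq_inv']

theorem tf_conj (s : ℂ) : tf A B C 0 (starRingEnd ℂ s) = (tf A B C 0 s).map (starRingEnd ℂ) := by
  have hr : ∀ {a b : ℕ} (X : Matrix (Fin a) (Fin b) ℝ),
      (X.map Complex.ofReal).map (starRingEnd ℂ) = X.map Complex.ofReal := by
    intro a b X; ext i j; simp
  have hM : (starRingEnd ℂ s) • (1 : Matrix (Fin n) (Fin n) ℂ) - A.map Complex.ofReal =
      (s • (1 : Matrix (Fin n) (Fin n) ℂ) - A.map Complex.ofReal).map (starRingEnd ℂ) := by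
    ext i j; by_cases hij : i = j <;> simp [hij]
  have hinv : ∀ X : Matrix (Fin n) (Fin n) ℂ,
      (X.map (starRingEnd ℂ))⁻¹ = X⁻¹.map (starRingEnd ℂ) := by
    intro X
    have : ∀ Y : Matrix (Fin n) (Fin n) ℂ, Y.map (starRingEnd ℂ) = Yᴴᵀ := by
      intro Y; ext i j; simp [conjTranspose_apply]
    rw [this, this, conjTranspose_nonsing_inv, transpose_nonsing_inv]
  unfold tf
  rw [hM, hinv]
  simp only [Matrix.map_zero _ Complex.ofReal_zero, add_zero]
  rw [Matrix.map_mul, Matrix.map_mul, hr, hr]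

theorem eigs_conj (s : ℂ) (h : s ∈ eigs A) : starRingEnd ℂ s ∈ eigs A := by
  rw [mem_eigs_iff] at h ⊢
  have hM : (starRingEnd ℂ s) • (1 : Matrix (Fin n) (Fin n) ℂ) - A.map Complex.ofReal =
      (starRingEnd ℂ).mapMatrix (s • (1 : Matrix (Fin n) (Fin n) ℂ) - A.map Complex.ofReal) := by
    ext i j; by_cases hij : i = j <;> simp [hij]
  rw [hM, ← RingHom.map_det, h, map_zero]

theorem qf_tf_conj (s : ℂ) (x : Fin m → ℂ) :
    qf (tf A B C 0 (starRingEnd ℂ s)) x = starRingEnd ℂ (qf (tf A B C 0 s) (star x)) := by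
  rw [tf_conj, qf_map_conj]; rfl

theorem tf_bdd (x : Fin m → ℂ) :
    ∃ M R : ℝ, ∀ s : ℂ, R ≤ ‖s‖ → ‖s * qf (tf A B C 0 s) x‖ ≤ M := by
  let G : ℂ → ℂ := fun t => qf (C.map (Complex.ofReal) *
      ((1 : Matrix (Fin n) (Fin n) ℂ) - t • A.map Complex.ofReal)⁻¹ * B.map Complex.ofReal) x
  have hG : ContinuousAt G 0 := by
    apply (continuous_qf x).continuousAt.comp
    have h1 : ContinuousAt (fun t : ℂ => ((1 : Matrix (Fin n) (Fin n) ℂ) - t • A.map Complex.ofReal)⁻¹)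
        0 := by
      simp only [inv_def, Ring.inverse_eq_inv']
      have hc : Continuous fun t : ℂ => ((1 : Matrix (Fin n) (Fin n) ℂ) - t • A.map Complex.ofReal) := by
        fun_prop
      apply ContinuousAt.fun_smul
      · apply ContinuousAt.inv₀ hc.matrix_det.continuousAt
        simp
      · exact hc.matrix_adjugate.continuousAt
    have hc2 : Continuous fun Y : Matrix (Fin n) (Fin n) ℂ =>
      C.map (Complex.ofReal) * Y * B.map Complex.ofReal := by fun_prop
    exact hc2.continuousAt.comp h1
  have hlim := (hG.tendsto.comp (tendsto_inv₀_cobounded (α := ℂ))).norm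
  have hev := hlim.eventually (eventually_le_nhds (lt_add_one _))
  have hev2 := hev.and (tendsto_norm_cobounded_atTop.eventually (eventually_gt_atTop (0:ℝ)))
  rw [← comap_norm_atTop, eventually_comap, eventually_atTop] at hev2
  obtain ⟨R, hR⟩ := hev2
  refine ⟨‖G 0‖ + 1, R, fun s hs => ?_⟩
  obtain ⟨h1, h2'⟩ := hR _ hs s rfl
  have h2 : s ≠ 0 := norm_pos_iff.1 h2'
  refine le_trans (le_of_eq (congrArg norm ?_)) h1
  change _ = qf (C.map (Complex.ofReal) *
      ((1 : Matrix (Fin n) (Fin n) ℂ) - s⁻¹ • A.map Complex.ofReal)⁻¹ * B.map Complex.ofReal) x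
  rw [← qf_smul]
  congr 1
  have h3 : (1 : Matrix (Fin n) (Fin n) ℂ) - s⁻¹ • A.map Complex.ofReal =
      s⁻¹ • (s • (1 : Matrix (Fin n) (Fin n) ℂ) - A.map Complex.ofReal) := by
    rw [smul_sub, smul_smul, inv_mul_cancel₀ h2, one_smul]
  have h4 : ∀ Y : Matrix (Fin n) (Fin n) ℂ, (s⁻¹ • Y)⁻¹ = s • Y⁻¹ := by
    intro Y
    by_cases hY : IsUnit Y.det
    · apply inv_eq_left_inv
      rw [smul_mul_smul_comm, mul_inv_cancel₀ h2, nonsing_inv_mul _ hY, one_smul]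
    · rw [nonsing_inv_apply_not_isUnit Y hY, smul_zero, nonsing_inv_apply_not_isUnit]
      rw [det_smul]
      intro h
      exact hY (isUnit_of_mul_isUnit_right h)
  rw [h3, h4]
  simp [tf]

end

/-- Lemma 2: a strictly proper system is negative imaginary iff `A` has no eigenvalue at the
origin and `F(s) = s R(s)` is positive real. -/
theorem ni_iff_sR_positive_real {n m : ℕ} (A : Matrix (Fin n) (Fin n) ℝ)
    (B : Matrix (Fin n) (Fin m) ℝ) (C : Matrix (Fin m) (Fin n) ℝ)
    (hmin : IsMinimal A B C) :
    IsNI A B C 0 ↔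
      ((0 : ℂ) ∉ eigs A ∧
        ((∀ μ ∈ eigs A, μ.re ≤ 0) ∧
          ∀ s : ℂ, 0 < s.re →
            (s • tf A B C 0 s + (s • tf A B C 0 s)ᴴ).PosSemidef)) := by
  constructor
  · rintro ⟨h1, h2, h3⟩
    refine ⟨fun h => (h1 0 h).1 rfl, fun μ hμ => (h1 μ hμ).2, fun s hs => ?_⟩
    rw [psd_add_iff]
    intro x
    rw [qf_smul]
    obtain ⟨q, N, hq, hN, hqN, hqe⟩ := tf_rational A B C x
    have hfin : (eigs A).Finite := Matrix.finite_spectrum _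
    have hfin1 : (eigs A ∩ {s | s.re = 0}).Finite := hfin.inter_of_left _
    have hfin2 : (eigs A ∩ {s | s.re < 0}).Finite := hfin.inter_of_left _
    -- residues on the upper half axis
    have hres : ∀ p : ℂ, p.re = 0 → 0 < p.im → p ∈ eigs A → ∀ y : Fin m → ℂ, ∃ r : ℝ, 0 ≤ r ∧
        Tendsto (fun s => (s - p) * (s * qf (tf A B C 0 s) y)) (𝓝[≠] p) (𝓝 (r : ℂ)) := by
      intro p hp0 hp1 hpe y
      have hpI : Complex.I * (p.im : ℂ) = p := by apply Complex.ext <;> simp [hp0]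
      obtain ⟨K, hK, hKp⟩ := h3 p.im hp1 (by rwa [hpI])
      rw [hpI] at hK
      have hKy : 0 ≤ qf K y := hKp.dotProduct_mulVec_nonneg y
      obtain ⟨hre, him⟩ := Complex.nonneg_iff.1 hKy
      have hKr : qf K y = ((qf K y).re : ℝ) := by
        apply Complex.ext <;> simp [← him]
      refine ⟨p.im * (qf K y).re, mul_nonneg hp1.le hre, ?_⟩
      have ht : Tendsto (fun s : ℂ => -Complex.I * s) (𝓝[≠] p) (𝓝 (-Complex.I * p)) :=
        ((by fun_prop : Continuous fun s : ℂ => -Complex.I * s).tendsto p).mono_left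
          nhdsWithin_le_nhds
      have h4 := ht.mul (((continuous_qf y).tendsto K).comp hK)
      have h5 : -Complex.I * p * qf K y = ((p.im * (qf K y).re : ℝ) : ℂ) := by
        rw [Complex.ofReal_mul, ← hKr]
        congr 1
        nth_rewrite 1 [← hpI]
        linear_combination (-(p.im : ℂ)) * Complex.I_sq
      rw [h5] at h4
      refine h4.congr fun s => ?_
      simp only [Function.comp, qf_smul]
      linear_combination (-(s - p) * s * qf (tf A B C 0 s) y) * Complex.I_sq
    have hbd : ∀ p : ℂ, p.re = 0 → 0 < p.im → p ∉ eigs A → ∀ y : Fin m → ℂ,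
        0 ≤ (p * qf (tf A B C 0 p) y).re := by
      intro p hp0 hp1 hpe y
      have hpI : Complex.I * (p.im : ℂ) = p := by apply Complex.ext <;> simp [hp0]
      have h4 := h2 p.im hp1 (by rwa [hpI])
      rw [hpI] at h4
      have h5 : Complex.I • (tf A B C 0 p - (tf A B C 0 p)ᴴ) =
          Complex.I • tf A B C 0 p + (Complex.I • tf A B C 0 p)ᴴ := by
        rw [conjTranspose_smul, smul_sub, sub_eq_add_neg]; simp
      rw [h5, psd_add_iff] at h4
      have h6 := h4 y
      rw [qf_smul] at h6
      have h7 : p * qf (tf A B C 0 p) y = (p.im : ℂ) * (Complex.I * qf (tf A B C 0 p) y) := by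
        nth_rewrite 1 [← hpI]
        ring
      rw [h7, Complex.re_ofReal_mul]
      exact mul_nonneg hp1.le h6
    refine pr_main (eigs A ∩ {s | s.re < 0})ᶜ hfin2.isClosed.isOpen_compl ?_ hfin1.toFinset
      (fun s => s * qf (tf A B C 0 s) x) ?_ ?_ ?_ (tf_bdd A B C x) s hs
    · rintro z hz ⟨-, hz'⟩
      exact absurd hz' (not_lt.2 hz)
    · intro z hzU hzS
      have hze : z ∉ eigs A := by
        intro hz
        rcases lt_or_eq_of_le (h1 z hz).2 with h | h
        · exact hzU ⟨hz, h⟩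
        · exact hzS (by simpa using ⟨hz, h⟩)
      simp only [hqN]
      have hq0 : q z ≠ 0 := fun h => hze ((hqe z).2 h)
      exact differentiableAt_id.mul (((hq z).inv hq0).mul (hN z))
    · intro p hp
      obtain ⟨hpe, hp0⟩ : p ∈ eigs A ∧ p.re = 0 := by simpa using hp
      refine ⟨hp0, ?_⟩
      rcases lt_trichotomy p.im 0 with h | h | h
      · obtain ⟨r, hr, hlim⟩ := hres (starRingEnd ℂ p) (by simpa using hp0) (by simpa using h)
          (eigs_conj A p hpe) (star x)
        refine ⟨r, hr, ?_⟩
        have hcc : Tendsto (fun s : ℂ => starRingEnd ℂ s) (𝓝[≠] p) (𝓝[≠] (starRingEnd ℂ p)) := by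
          apply tendsto_nhdsWithin_iff.2
          constructor
          · exact (Complex.continuous_conj.tendsto p).mono_left nhdsWithin_le_nhds
          · filter_upwards [self_mem_nhdsWithin] with z hz hz'
            exact hz ((starRingEnd ℂ).injective hz')
        have h4 := (Complex.continuous_conj.tendsto _).comp (hlim.comp hcc)
        rw [Complex.conj_ofReal] at h4
        refine h4.congr fun z => ?_
        simp [qf_tf_conj]
      · exact absurd (Complex.ext hp0 h) (h1 p hpe).1
      · exact hres p hp0 h hpe x
    · intro z hz hzS
      have hze : z ∉ eigs A := fun h => hzS (by simpa using ⟨h, hz⟩)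
      rcases lt_trichotomy z.im 0 with h | h | h
      · have hze' : starRingEnd ℂ z ∉ eigs A := fun h' => hze (by simpa using eigs_conj A _ h')
        have h4 := hbd (starRingEnd ℂ z) (by simpa using hz) (by simpa using h) hze' (star x)
        rw [qf_tf_conj, ← map_mul, Complex.conj_re, star_star] at h4
        exact h4
      · have : z = 0 := Complex.ext hz h
        simp [this]
      · exact hbd z hz h hze x
  · rintro ⟨h0, h1, h2⟩
    have hpos : ∀ (x : Fin m → ℂ) (s : ℂ), 0 < s.re → 0 ≤ (s * qf (tf A B C 0 s) x).re := by
      intro x s hs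
      rw [← qf_smul]
      exact (psd_add_iff _).1 (h2 s hs) x
    refine ⟨fun μ hμ => ⟨fun h => h0 (h ▸ hμ), h1 μ hμ⟩, fun ω hω hωe => ?_, fun ω hω hωe => ?_⟩
    · have h5 : Complex.I • (tf A B C 0 (Complex.I * ω) - (tf A B C 0 (Complex.I * ω))ᴴ) =
          Complex.I • tf A B C 0 (Complex.I * ω) + (Complex.I • tf A B C 0 (Complex.I * ω))ᴴ := by
        rw [conjTranspose_smul, smul_sub, sub_eq_add_neg]; simp
      rw [h5, psd_add_iff]
      intro x
      rw [qf_smul]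
      obtain ⟨q, N, hq, hN, hqN, hqe⟩ := tf_rational A B C x
      have hq0 : q (Complex.I * ω) ≠ 0 := fun h => hωe ((hqe _).2 h)
      have hc : ContinuousAt (fun s => s * qf (tf A B C 0 s) x) (Complex.I * ω) := by
        simp only [hqN]
        exact continuousAt_id.mul (((hq _).continuousAt.inv₀ hq0).mul (hN _).continuousAt)
      have ht : Tendsto (fun t : ℝ => Complex.I * ω + t) (𝓝[>] 0) (𝓝 (Complex.I * ω)) := by
        have : Tendsto (fun t : ℝ => Complex.I * ω + t) (𝓝 0) (𝓝 (Complex.I * ω + (0 : ℝ))) :=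
          (by fun_prop : Continuous fun t : ℝ => Complex.I * ω + t).tendsto 0
        rw [Complex.ofReal_zero, add_zero] at this
        exact this.mono_left nhdsWithin_le_nhds
      have h6 := (Complex.continuous_re.tendsto _).comp (hc.tendsto.comp ht)
      have h7 : 0 ≤ (Complex.I * ω * qf (tf A B C 0 (Complex.I * ω)) x).re := by
        refine ge_of_tendsto h6 ?_
        filter_upwards [self_mem_nhdsWithin] with t ht
        apply hpos
        have : (0 : ℝ) < t := ht
        simpa using this
      rw [mul_comm Complex.I, mul_assoc, Complex.re_ofReal_mul] at h7
      rw [mul_comm Complex.I (ω : ℂ)]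
      exact nonneg_of_mul_nonneg_right h7 hω
    · apply tendsto_of_qf
      intro x
      obtain ⟨q, N, hq, hN, hqN, hqe⟩ := tf_rational A B C x
      have hm : MeromorphicAt (fun s => s * qf (tf A B C 0 s) x) (Complex.I * ω) := by
        simp only [hqN]
        exact (MeromorphicAt.id _).mul
          (((hq.analyticAt _).meromorphicAt.inv).mul (hN.analyticAt _).meromorphicAt)
      obtain ⟨r, hr, hlim⟩ := pr_pole _ (Complex.I * ω) (by simp) hm (hpos x)
      refine ⟨r / ω, div_nonneg hr hω.le, ?_⟩
      have hp0 : Complex.I * (ω : ℂ) ≠ 0 := by simp [hω.ne']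
      have ht : Tendsto (fun s : ℂ => Complex.I * s⁻¹) (𝓝[≠] (Complex.I * ω))
          (𝓝 (Complex.I * (Complex.I * ω)⁻¹)) :=
        ((continuousAt_id.inv₀ hp0).tendsto.const_mul Complex.I).mono_left nhdsWithin_le_nhds
      have h4 := ht.mul hlim
      have h5 : Complex.I * (Complex.I * (ω : ℂ))⁻¹ * r = ((r / ω : ℝ) : ℂ) := by
        push_cast
        have : (ω : ℂ) ≠ 0 := by exact_mod_cast hω.ne'
        have hI := Complex.I_ne_zero
        field_simp
      rw [h5] at h4
      refine h4.congr' ?_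
      have hne : ∀ᶠ s in 𝓝[≠] (Complex.I * (ω : ℂ)), s ≠ 0 :=
        nhdsWithin_le_nhds (isOpen_ne.mem_nhds hp0)
      filter_upwards [hne] with s hs
      simp only [qf_smul]
      field_simp
end

section
/- Let (A,B,C,D) be a minimal state-space realization of an m×m real-rational proper transfer function R(s) = C(sI − A)⁻¹B + D. Then the system is negative imaginary if and only if: (1) det(A) ≠ 0 and D = Dᵀ; and (2) there exists a real symmetric matrix Y ≻ 0, Y ∈ ℝ^{n×n}, such that AY + YAᵀ ⪯ 0 and B + AYCᵀ = 0. -/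
open Matrix Filter Topology ComplexOrder

/-- Square root and pseudo-inverse square root. -/
lemma psd_pinv {k : Type*} [Fintype k] [DecidableEq k] {W : Matrix k k ℂ} (hW : W.PosSemidef) :
    ∃ R S : Matrix k k ℂ, Rᴴ = R ∧ Sᴴ = S ∧ R * R = W ∧ R * S = S * R ∧ R * S * R = R := by
  set V : Matrix k k ℂ := (hW.isHermitian.eigenvectorUnitary : Matrix k k ℂ) with hV
  set d := hW.isHermitian.eigenvalues with hd
  have hVV : Vᴴ * V = 1 := by
    have := Unitary.coe_star_mul_self hW.isHermitian.eigenvectorUnitary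
    simpa [star_eq_conjTranspose] using this
  have hsp : W = V * diagonal (fun i => (d i : ℂ)) * Vᴴ := by
    have := hW.isHermitian.spectral_theorem
    rw [Unitary.conjStarAlgAut_apply] at this
    exact this
  have key : ∀ p q : k → ℂ, (V * diagonal p * Vᴴ) * (V * diagonal q * Vᴴ)
      = V * diagonal (fun i => p i * q i) * Vᴴ := by
    intro p q
    calc _ = V * diagonal p * (Vᴴ * V) * diagonal q * Vᴴ := by simp only [Matrix.mul_assoc]
      _ = _ := by rw [hVV, Matrix.mul_one, Matrix.mul_assoc V, diagonal_mul_diagonal]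
  have hd0 : ∀ i, 0 ≤ d i := fun i => hW.eigenvalues_nonneg i
  refine ⟨V * diagonal (fun i => ((Real.sqrt (d i) : ℝ) : ℂ)) * Vᴴ,
    V * diagonal (fun i => (((Real.sqrt (d i))⁻¹ : ℝ) : ℂ)) * Vᴴ, ?_, ?_, ?_, ?_, ?_⟩
  · simp [Matrix.conjTranspose_mul, Matrix.mul_assoc, diagonal_conjTranspose]
    congr 2; congr 1; ext i; simp
  · simp [Matrix.conjTranspose_mul, Matrix.mul_assoc, diagonal_conjTranspose]
    congr 2; congr 1; ext i; simp
  · rw [key, hsp]; congr 2; congr 1; ext i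
    rw [← Complex.ofReal_mul, Real.mul_self_sqrt (hd0 i)]
  · rw [key, key]; congr 2; congr 1; ext i; ring
  · rw [key, key]; congr 2; congr 1; ext i
    by_cases h : ((Real.sqrt (d i) : ℝ) : ℂ) = 0
    · simp [h]
    · push_cast; field_simp

/-- Rantzer-type decomposition. -/
lemma skew_decomp {k : Type*} [Fintype k] [DecidableEq k] {W a : Matrix k k ℂ}
    (hW : W.PosSemidef) (h : a * W + W * aᴴ = 0) :
    ∃ (X : Matrix k k ℂ) (t : k → ℝ), W = X * Xᴴ ∧
      a * X = X * diagonal (fun i => Complex.I * (t i : ℂ)) := by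
  obtain ⟨R, S, hR, hS, hRR, hc, hRSR⟩ := psd_pinv hW
  have haW : a * W = - (W * aᴴ) := eq_neg_of_add_eq_zero_left h
  have hRRS : R * R * S = R := by rw [Matrix.mul_assoc, hc, ← Matrix.mul_assoc, hRSR]
  have hWS : W * S = R := by rw [← hRR, hRRS]
  have hSW : S * W = R := by
    rw [← hRR, ← Matrix.mul_assoc, ← hc, hRSR]
  set H : Matrix k k ℂ := (-Complex.I) • (S * (a * W) * S) with hH
  have hHh : H.IsHermitian := by
    unfold Matrix.IsHermitian
    rw [hH, conjTranspose_smul, conjTranspose_mul, conjTranspose_mul, conjTranspose_mul, hS,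
      hW.isHermitian.eq, ← neg_eq_iff_eq_neg.mpr haW]
    simp [Matrix.mul_assoc]
  have hRSaW : R * S * (a * W) = a * W := by
    rw [haW]
    have : R * S * W = W := by
      rw [← hRR, ← Matrix.mul_assoc, hRSR]
    rw [Matrix.mul_neg, ← Matrix.mul_assoc, this]
  have haR : a * R = Complex.I • (R * H) := by
    rw [hH, Matrix.mul_smul, smul_smul, ← Matrix.mul_assoc, ← Matrix.mul_assoc, hRSaW,
      Matrix.mul_assoc, hWS]
    simp
  set Q : Matrix k k ℂ := (hHh.eigenvectorUnitary : Matrix k k ℂ) with hQ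
  have hQQ : Qᴴ * Q = 1 := by
    have := Unitary.coe_star_mul_self hHh.eigenvectorUnitary
    simpa [star_eq_conjTranspose] using this
  have hQQ' : Q * Qᴴ = 1 := by
    have := Unitary.coe_mul_star_self hHh.eigenvectorUnitary
    simpa [star_eq_conjTranspose] using this
  have hsp : H = Q * diagonal (fun i => (hHh.eigenvalues i : ℂ)) * Qᴴ := by
    have := hHh.spectral_theorem
    rw [Unitary.conjStarAlgAut_apply] at this
    exact this
  refine ⟨R * Q, hHh.eigenvalues, ?_, ?_⟩
  · rw [conjTranspose_mul, hR, ← hRR]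
    calc R * R = R * 1 * R := by simp
      _ = _ := by rw [← hQQ']; simp only [Matrix.mul_assoc]
  · have e1 : diagonal (fun i => Complex.I * (hHh.eigenvalues i : ℂ))
        = Complex.I • diagonal (fun i => (hHh.eigenvalues i : ℂ)) := by
      rw [← diagonal_smul]; rfl
    have e2 : H * Q = Q * diagonal (fun i => (hHh.eigenvalues i : ℂ)) := by
      conv_lhs => rw [hsp]
      rw [Matrix.mul_assoc, hQQ, Matrix.mul_one]
    rw [e1, ← Matrix.mul_assoc, haR, Matrix.smul_mul, Matrix.mul_assoc, e2, Matrix.mul_smul,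
      Matrix.mul_assoc]

/-- Image of a closed cone under a linear map injective on it is closed. -/
lemma closed_cone_image {E F : Type*} [NormedAddCommGroup E] [NormedSpace ℝ E]
    [FiniteDimensional ℝ E] [NormedAddCommGroup F] [NormedSpace ℝ F]
    (f : E →ₗ[ℝ] F) (K : Set E) (hK : IsClosed K)
    (hcone : ∀ x ∈ K, ∀ r : ℝ, 0 ≤ r → r • x ∈ K) (hker : ∀ x ∈ K, f x = 0 → x = 0) :
    IsClosed (f '' K) := by
  have hfc : Continuous f := f.continuous_of_finiteDimensional
  have : ProperSpace E := FiniteDimensional.proper ℝ E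
  -- lower bound
  obtain ⟨c, hc, hlow⟩ : ∃ c : ℝ, 0 < c ∧ ∀ x ∈ K, c * ‖x‖ ≤ ‖f x‖ := by
    have hcomp : IsCompact (K ∩ Metric.sphere (0 : E) 1) :=
      (isCompact_sphere 0 1).inter_left hK
    by_cases hne : (K ∩ Metric.sphere (0 : E) 1).Nonempty
    · obtain ⟨x0, hx0, hmin⟩ := hcomp.exists_isMinOn hne (hfc.norm.continuousOn)
      have hx0n : ‖x0‖ = 1 := by simpa using hx0.2
      refine ⟨‖f x0‖, ?_, ?_⟩
      · rw [norm_pos_iff]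
        intro h
        have := hker x0 hx0.1 h
        rw [this] at hx0n; simp at hx0n
      · intro x hx
        by_cases hx0' : x = 0
        · simp [hx0']
        · have hxn : 0 < ‖x‖ := norm_pos_iff.mpr hx0'
          have hm : ‖x‖⁻¹ • x ∈ K ∩ Metric.sphere (0 : E) 1 := by
            refine ⟨hcone x hx _ (by positivity), ?_⟩
            simp [norm_smul, hxn.ne']
          have := hmin hm
          simp only [Set.mem_setOf_eq, map_smul, norm_smul, norm_inv, norm_norm] at this
          rw [inv_mul_eq_div, le_div_iff₀ hxn] at this
          exact this
    · refine ⟨1, one_pos, ?_⟩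
      intro x hx
      by_cases hx0' : x = 0
      · simp [hx0']
      · exfalso
        have hxn : 0 < ‖x‖ := norm_pos_iff.mpr hx0'
        exact hne ⟨‖x‖⁻¹ • x, hcone x hx _ (by positivity), by simp [norm_smul, hxn.ne']⟩
  rw [← closure_subset_iff_isClosed]
  intro y hy
  have hcl : IsClosed (f '' (K ∩ Metric.closedBall 0 ((‖y‖ + 1) / c))) :=
    (((isCompact_closedBall 0 _).inter_left hK).image hfc).isClosed
  have hy2 : y ∈ closure (f '' (K ∩ Metric.closedBall 0 ((‖y‖ + 1) / c))) := by
    rw [Metric.mem_closure_iff] at hy ⊢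
    intro ε hε
    obtain ⟨_, ⟨x, hx, rfl⟩, hd⟩ := hy (min ε 1) (by positivity)
    refine ⟨f x, ⟨x, ⟨hx, ?_⟩, rfl⟩, lt_of_lt_of_le hd (min_le_left _ _)⟩
    have h1 : dist y (f x) < 1 := lt_of_lt_of_le hd (min_le_right _ _)
    have h2 : ‖f x‖ ≤ ‖y‖ + 1 := by
      have := norm_sub_norm_le (f x) y
      rw [dist_eq_norm, norm_sub_rev] at h1
      linarith
    rw [mem_closedBall_zero_iff, le_div_iff₀ hc, mul_comm]
    exact (hlow x hx).trans h2
  rw [hcl.closure_eq] at hy2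
  obtain ⟨x, hx, rfl⟩ := hy2
  exact ⟨x, hx.1, rfl⟩


section KYP
attribute [local instance] Matrix.normedAddCommGroup Matrix.normedSpace

lemma psd_isClosed {k : Type*} [Fintype k] [DecidableEq k] :
    IsClosed {M : Matrix k k ℂ | M.PosSemidef} := by
  have : {M : Matrix k k ℂ | M.PosSemidef} = {M | Mᴴ = M} ∩ ⋂ x : k → ℂ,
      {M | 0 ≤ star x ⬝ᵥ (M *ᵥ x)} := by
    ext M
    simp [posSemidef_iff_dotProduct_mulVec, Matrix.IsHermitian]
  rw [this]
  refine (isClosed_eq (by fun_prop) (by fun_prop)).inter (isClosed_iInter fun x => ?_)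
  exact isClosed_le (by fun_prop) (by fun_prop)

lemma functional_trace {k : Type*} [Fintype k] [DecidableEq k] (g : Matrix k k ℂ →ₗ[ℂ] ℂ) :
    ∃ W : Matrix k k ℂ, ∀ X, g X = (W * X).trace := by
  refine ⟨Matrix.of fun i j => g (single j i 1), fun X => ?_⟩
  conv_lhs => rw [matrix_eq_sum_single X]
  simp only [map_sum, Matrix.trace, Matrix.diag, Matrix.mul_apply, of_apply]
  rw [Finset.sum_comm]
  refine Finset.sum_congr rfl fun i _ => Finset.sum_congr rfl fun j _ => ?_
  have : single j i (X j i) = X j i • single j i (1 : ℂ) := by simp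
  rw [this, map_smul, smul_eq_mul, mul_comm]

lemma trace_fromBlocks_aux {n m : Type*} [Fintype n] [Fintype m] (A : Matrix n n ℂ)
    (B : Matrix n m ℂ) (C : Matrix m n ℂ) (D : Matrix m m ℂ) :
    (fromBlocks A B C D).trace = A.trace + D.trace := by
  simp [Matrix.trace, Fintype.sum_sum_type]

/-- kernel triviality -/
lemma kyp_kernel {n m : Type*} [Fintype n] [Fintype m] [DecidableEq n] [DecidableEq m] {N : ℕ}
    (a : Matrix n n ℂ) (b : Matrix n m ℂ)
    (Q : Fin N → Matrix m n ℂ) (hQ : ∑ k : Fin N, a ^ (k : ℕ) * b * Q k = 1)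
    (P : Matrix n n ℂ) (hN : (-(P * a + aᴴ * P)).PosSemidef) (hPh : Pᴴ = P) (hPb : P * b = 0) :
    P = 0 := by
  have step : ∀ Z : Matrix n m ℂ, P * Z = 0 → P * (a * Z) = 0 := by
    intro Z hZ
    have hZ' : Zᴴ * P = 0 := by
      have := congrArg conjTranspose hZ
      simpa [conjTranspose_mul, hPh] using this
    have h0 : ∀ v, (-(P * a + aᴴ * P)) *ᵥ (Z *ᵥ v) = 0 := by
      intro v
      rw [← hN.dotProduct_mulVec_zero_iff]
      have : Zᴴ * (-(P * a + aᴴ * P)) * Z = 0 := by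
        have e : Zᴴ * (-(P * a + aᴴ * P)) * Z
            = - ((Zᴴ * P) * a * Z + Zᴴ * aᴴ * (P * Z)) := by
          simp only [Matrix.mul_add, Matrix.add_mul, Matrix.neg_mul, Matrix.mul_neg,
            Matrix.mul_assoc]
        rw [e, hZ, hZ']; simp
      rw [star_mulVec, ← dotProduct_mulVec, mulVec_mulVec, mulVec_mulVec, this]
      simp
    have h1 : (-(P * a + aᴴ * P)) * Z = 0 := by
      apply Matrix.ext_of_mulVec_single
      intro i
      rw [← mulVec_mulVec, h0, Matrix.zero_mulVec]
    have h2 : (-(P * a + aᴴ * P)) * Z = -(P * (a * Z)) - aᴴ * (P * Z) := by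
      simp only [Matrix.add_mul, Matrix.neg_mul, Matrix.mul_assoc]; abel
    rw [h2, hZ] at h1
    simpa using h1
  have hall : ∀ k : ℕ, P * (a ^ k * b) = 0 := by
    intro k
    induction k with
    | zero => simpa using hPb
    | succ k ih => 
      rw [pow_succ', Matrix.mul_assoc]; exact step _ ih
  calc P = P * 1 := by simp
    _ = 0 := by
      rw [← hQ, Matrix.mul_sum]
      refine Finset.sum_eq_zero fun k _ => ?_
      rw [← Matrix.mul_assoc, hall, Matrix.zero_mul]


/-- Existence of a (Hermitian) solution to the positive real LMI. -/
lemma kyp_exists {n m : Type*} [Fintype n] [Fintype m] [DecidableEq n] [DecidableEq m] {N : ℕ}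
    (a : Matrix n n ℂ) (b : Matrix n m ℂ) (c : Matrix m n ℂ)
    (Q : Fin N → Matrix m n ℂ) (hQ : ∑ k : Fin N, a ^ (k : ℕ) * b * Q k = 1)
    (hfdi : ∀ (x : n → ℂ) (u : m → ℂ) (ω : ℝ), a *ᵥ x + b *ᵥ u = (Complex.I * ω) • x →
      0 ≤ (star u ⬝ᵥ (c *ᵥ x)).re) :
    ∃ P : Matrix n n ℂ, Pᴴ = P ∧ (-(P * a + aᴴ * P)).PosSemidef ∧ P * b = cᴴ := by
  classical
  let f : (Matrix n n ℂ × Matrix (n ⊕ m) (n ⊕ m) ℂ) →ₗ[ℝ] Matrix (n ⊕ m) (n ⊕ m) ℂ :=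
    { toFun := fun p => fromBlocks (p.1 * a + aᴴ * p.1) (p.1 * b) (bᴴ * p.1) 0 + p.2
      map_add' := by
        intro p q
        have : fromBlocks ((p.1 + q.1) * a + aᴴ * (p.1 + q.1)) ((p.1 + q.1) * b)
            (bᴴ * (p.1 + q.1)) (0 : Matrix m m ℂ)
          = fromBlocks (p.1 * a + aᴴ * p.1) (p.1 * b) (bᴴ * p.1) 0
            + fromBlocks (q.1 * a + aᴴ * q.1) (q.1 * b) (bᴴ * q.1) 0 := by
          rw [fromBlocks_add]
          congr 1
          · simp only [Matrix.add_mul, Matrix.mul_add]; abel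
          · simp only [Matrix.add_mul]
          · simp only [Matrix.mul_add]
          · simp
        simp only [Prod.fst_add, Prod.snd_add, this]
        abel
      map_smul' := by
        intro r p
        simp only [Prod.smul_fst, Prod.smul_snd, RingHom.id_apply, smul_add, fromBlocks_smul,
          Matrix.smul_mul, Matrix.mul_smul, smul_zero] }
  have hf : ∀ P S, f (P, S) = fromBlocks (P * a + aᴴ * P) (P * b) (bᴴ * P) 0 + S :=
    fun P S => rfl
  set K : Set (Matrix n n ℂ × Matrix (n ⊕ m) (n ⊕ m) ℂ) :=
    {p | p.1ᴴ = p.1 ∧ p.2.PosSemidef} with hK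
  have hKcl : IsClosed K := by
    have h1 : IsClosed {p : Matrix n n ℂ × Matrix (n ⊕ m) (n ⊕ m) ℂ | p.1ᴴ = p.1} :=
      isClosed_eq (by fun_prop) (by fun_prop)
    have h2 : IsClosed {p : Matrix n n ℂ × Matrix (n ⊕ m) (n ⊕ m) ℂ | p.2.PosSemidef} :=
      psd_isClosed.preimage continuous_snd
    exact h1.inter h2
  have hcone : ∀ x ∈ K, ∀ r : ℝ, 0 ≤ r → r • x ∈ K := by
    rintro ⟨P, S⟩ ⟨h1, h2⟩ r hr
    refine ⟨?_, ?_⟩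
    · simp only [Prod.smul_fst, conjTranspose_smul, star_trivial]; rw [show Pᴴ = P from h1]
    · exact PosSemidef.smul h2 hr
  -- information from the lower right block
  have hblock : ∀ S : Matrix (n ⊕ m) (n ⊕ m) ℂ, S.PosSemidef → S.toBlocks₂₂ = 0 →
      S.toBlocks₁₂ = 0 := by
    intro S hS h22
    have h0 : ∀ v : m → ℂ, S *ᵥ (Sum.elim 0 v) = 0 := by
      intro v
      rw [← hS.dotProduct_mulVec_zero_iff, ← fromBlocks_toBlocks S, h22, fromBlocks_mulVec]
      simp [dotProduct, Fintype.sum_sum_type]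
    apply Matrix.ext_of_mulVec_single
    intro j
    have := h0 (Pi.single j 1)
    rw [← fromBlocks_toBlocks S, fromBlocks_mulVec, Sum.elim_comp_inl, Sum.elim_comp_inr] at this
    ext i
    have := congrFun this (Sum.inl i)
    simpa using this
  have h11 : ∀ S : Matrix (n ⊕ m) (n ⊕ m) ℂ, S.PosSemidef → S.toBlocks₁₁.PosSemidef := by
    intro S hS
    exact hS.submatrix Sum.inl
  have hker : ∀ x ∈ K, f x = 0 → x = 0 := by
    rintro ⟨P, S⟩ ⟨h1, h2⟩ h
    replace h1 : Pᴴ = P := h1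
    replace h2 : S.PosSemidef := h2
    rw [hf] at h
    have hS : S = fromBlocks (-(P * a + aᴴ * P)) (-(P * b)) (-(bᴴ * P)) 0 := by
      rw [eq_neg_of_add_eq_zero_right h, fromBlocks_neg, neg_zero]
    have h22 : S.toBlocks₂₂ = 0 := by rw [hS]; simp
    have h12 := hblock S h2 h22
    have hPb : P * b = 0 := by
      rw [hS] at h12; simpa using h12
    have hN := h11 S h2
    rw [hS, toBlocks_fromBlocks₁₁] at hN
    have hP := kyp_kernel a b Q hQ P hN h1 hPb
    subst hP
    ext1
    · rfl
    · rw [hS]; simp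
  have hcl := closed_cone_image f K hKcl hcone hker
  have hconv : Convex ℝ (f '' K) := by
    apply Convex.linear_image
    rintro ⟨P, S⟩ ⟨h1, h2⟩ ⟨P', S'⟩ ⟨h1', h2'⟩ r s hr hs _
    refine ⟨?_, ?_⟩
    · simp only [Prod.smul_mk, Prod.mk_add_mk, conjTranspose_add, conjTranspose_smul, star_trivial]
      rw [show Pᴴ = P from h1, show P'ᴴ = P' from h1']
    · exact (PosSemidef.smul h2 hr).add (PosSemidef.smul h2' hs)
  by_cases hT : fromBlocks 0 cᴴ c 0 ∈ f '' K
  · obtain ⟨⟨P, S⟩, ⟨h1, h2⟩, hPS⟩ := hT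
    replace h1 : Pᴴ = P := h1
    replace h2 : S.PosSemidef := h2
    rw [hf] at hPS
    have hS : S = fromBlocks (-(P * a + aᴴ * P)) (cᴴ - (P * b)) (c - (bᴴ * P)) 0 := by
      rw [eq_sub_of_add_eq' hPS, sub_eq_add_neg, fromBlocks_neg, fromBlocks_add]
      simp [sub_eq_add_neg]
    have h22 : S.toBlocks₂₂ = 0 := by rw [hS]; simp
    have h12 := hblock S h2 h22
    have hN := h11 S h2
    rw [hS, toBlocks_fromBlocks₁₁] at hN
    refine ⟨P, h1, hN, ?_⟩
    rw [hS, toBlocks_fromBlocks₁₂] at h12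
    exact (sub_eq_zero.mp h12).symm
  · exfalso
    obtain ⟨g, u, hgu, hg⟩ := RCLike.geometric_hahn_banach_point_closed (𝕜 := ℂ) hconv hcl hT
    obtain ⟨W, hW⟩ := functional_trace (g : Matrix (n ⊕ m) (n ⊕ m) ℂ →ₗ[ℂ] ℂ)
    replace hW : ∀ X, g X = (W * X).trace := hW
    have hu0 : u < 0 := by
      have := hg 0 ⟨0, ⟨by simp, PosSemidef.zero⟩, by simp⟩
      simpa using this
    have hpos : ∀ x ∈ K, 0 ≤ (W * f x).trace.re := by
      intro x hx
      by_contra hneg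
      push Not at hneg
      have hr : 0 ≤ u / (W * f x).trace.re := (div_pos_of_neg_of_neg hu0 hneg).le
      have := hg _ ⟨_, hcone x hx _ hr, rfl⟩
      rw [hW, map_smul, Matrix.mul_smul, trace_smul] at this
      simp only [RCLike.re_eq_complex_re, Complex.smul_re, smul_eq_mul] at this
      rw [div_mul_cancel₀ _ hneg.ne] at this
      exact lt_irrefl _ this
    have hTneg : (W * fromBlocks 0 cᴴ c 0).trace.re < 0 := by
      have := hgu.trans hu0
      rwa [hW] at this
    set V : Matrix (n ⊕ m) (n ⊕ m) ℂ := (2⁻¹ : ℝ) • (W + Wᴴ) with hV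
    have hVW : ∀ X : Matrix (n ⊕ m) (n ⊕ m) ℂ, Xᴴ = X →
        (V * X).trace.re = (W * X).trace.re := by
      intro X hX
      have e : (Wᴴ * X).trace = star (W * X).trace := by
        rw [← trace_conjTranspose, conjTranspose_mul, hX, trace_mul_comm]
      rw [hV, Matrix.smul_mul, trace_smul, Matrix.add_mul, trace_add, e]
      simp
      ring
    have hVh : Vᴴ = V := by
      rw [hV, conjTranspose_smul, conjTranspose_add, conjTranspose_conjTranspose, add_comm]
      simp
    have hVpsd : V.PosSemidef := by
      refine PosSemidef.of_dotProduct_mulVec_nonneg hVh fun v => ?_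
      have hp := posSemidef_vecMulVec_self_star (R := ℂ) v
      have h1 := hpos (0, vecMulVec v (star v)) ⟨by simp, hp⟩
      rw [hf] at h1
      simp only [Matrix.zero_mul, Matrix.mul_zero, add_zero, fromBlocks_zero, zero_add] at h1
      rw [← hVW _ hp.isHermitian] at h1
      have h2 : (V * vecMulVec v (star v)).trace = star v ⬝ᵥ (V *ᵥ v) := by
        rw [mul_vecMulVec, trace_vecMulVec, dotProduct_comm]
      rw [h2] at h1
      rw [Complex.le_def]
      refine ⟨h1, ?_⟩
      have h3 := Matrix.IsHermitian.im_star_dotProduct_mulVec_self (A := V) hVh v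
      exact h3.symm
    clear_value V
    obtain ⟨W11, W12, W21, W22, rfl⟩ : ∃ W11 W12 W21 W22, V = fromBlocks W11 W12 W21 W22 :=
      ⟨_, _, _, _, (fromBlocks_toBlocks V).symm⟩
    rw [fromBlocks_conjTranspose, fromBlocks_inj] at hVh
    obtain ⟨hh11, hh21, hh12, -⟩ := hVh
    have hW11 : W11.PosSemidef := by simpa using h11 _ hVpsd
    -- the Lyapunov-type equation
    have hM : a * W11 + W11 * aᴴ + b * W21 + W12 * bᴴ = 0 := by
      set M := a * W11 + W11 * aᴴ + b * W21 + W12 * bᴴ with hMdef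
      have hMh : Mᴴ = M := by
        rw [hMdef]
        simp only [conjTranspose_add, conjTranspose_mul, conjTranspose_conjTranspose, hh11, hh21,
          hh12]
        abel
      have htr : ∀ P : Matrix n n ℂ, (fromBlocks W11 W12 W21 W22 *
          fromBlocks (P * a + aᴴ * P) (P * b) (bᴴ * P) 0).trace = (M * P).trace := by
        intro P
        rw [fromBlocks_multiply, trace_fromBlocks_aux, hMdef]
        simp only [Matrix.add_mul, Matrix.mul_add, trace_add, Matrix.mul_zero, add_zero]
        have e1 : (W11 * (P * a)).trace = (a * W11 * P).trace := by
          rw [← Matrix.mul_assoc, trace_mul_comm, Matrix.mul_assoc]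
        have e2 : (W21 * (P * b)).trace = (b * W21 * P).trace := by
          rw [← Matrix.mul_assoc, trace_mul_comm, Matrix.mul_assoc]
        rw [e1, e2]
        simp only [Matrix.mul_assoc]
        ring
      have hLh : ∀ P : Matrix n n ℂ, Pᴴ = P →
          (fromBlocks (P * a + aᴴ * P) (P * b) (bᴴ * P) (0 : Matrix m m ℂ))ᴴ
            = fromBlocks (P * a + aᴴ * P) (P * b) (bᴴ * P) 0 := by
        intro P hP
        rw [fromBlocks_conjTranspose]
        simp only [conjTranspose_add, conjTranspose_mul, conjTranspose_conjTranspose, hP,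
          conjTranspose_zero]
        rw [add_comm]
      have hge : ∀ P : Matrix n n ℂ, Pᴴ = P → 0 ≤ (M * P).trace.re := by
        intro P hP
        have := hpos (P, 0) ⟨hP, PosSemidef.zero⟩
        rw [hf, add_zero, ← hVW _ (hLh P hP), htr] at this
        exact this
      have h1 := hge (-M) (by rw [conjTranspose_neg, hMh])
      have h2 : 0 ≤ (M * Mᴴ).trace := (posSemidef_self_mul_conjTranspose M).trace_nonneg
      rw [← trace_mul_conjTranspose_self_eq_zero_iff]
      rw [Matrix.mul_neg, trace_neg, Complex.neg_re] at h1
      rw [show M * M = M * Mᴴ by rw [hMh]] at h1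
      rw [Complex.le_def] at h2
      apply Complex.ext
      · have h3 := h2.1
        simp only [Complex.zero_re] at h3 ⊢
        linarith
      · exact h2.2.symm
    -- the range condition
    have hrange : ∀ y : n → ℂ, W11 *ᵥ y = 0 → W21 *ᵥ y = 0 := by
      intro y hy
      have h0 : fromBlocks W11 W12 W21 W22 *ᵥ (Sum.elim y 0) = 0 := by
        rw [← hVpsd.dotProduct_mulVec_zero_iff, fromBlocks_mulVec, Sum.elim_comp_inl,
          Sum.elim_comp_inr, hy]
        simp [dotProduct, Fintype.sum_sum_type]
      rw [fromBlocks_mulVec, Sum.elim_comp_inl, Sum.elim_comp_inr] at h0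
      ext i
      have := congrFun h0 (Sum.inr i)
      simpa using this
    obtain ⟨R, S, hR, hS, hRR, hc, hRSR⟩ := psd_pinv hW11
    have hWSR : W21 * (S * R) = W21 := by
      have h1 : W11 * (1 - S * R) = 0 := by
        rw [Matrix.mul_sub, Matrix.mul_one, ← hRR, Matrix.mul_assoc, ← Matrix.mul_assoc R S R,
          hRSR, sub_self]
      have h2 : W21 * (1 - S * R) = 0 := by
        apply Matrix.ext_of_mulVec_single
        intro i
        rw [← mulVec_mulVec, hrange _ (by rw [mulVec_mulVec, h1, Matrix.zero_mulVec]),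
          Matrix.zero_mulVec]
      rw [Matrix.mul_sub, Matrix.mul_one, sub_eq_zero] at h2
      exact h2.symm
    set G := W21 * S * S with hG
    have hGW : G * W11 = W21 := by
      have e : G * W11 = W21 * (S * (S * R) * R) := by
        rw [hG, ← hRR]; simp only [Matrix.mul_assoc]
      rw [e, ← hc, Matrix.mul_assoc, hRSR, hWSR]
    clear_value G
    have hWG : W11 * Gᴴ = W12 := by
      rw [← hh21, ← hGW, conjTranspose_mul, hh11]
    obtain ⟨X, t, hXX, hX⟩ := skew_decomp (a := a + b * G) hW11 (by
      rw [Matrix.add_mul, Matrix.mul_assoc, hGW, conjTranspose_add, conjTranspose_mul,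
        Matrix.mul_add, ← Matrix.mul_assoc, hWG, ← hM]
      abel)
    have hnn : 0 ≤ (W12 * c).trace.re := by
      have e : (W12 * c).trace = ((G * X)ᴴ * (c * X)).trace := by
        rw [← hWG, hXX, conjTranspose_mul, ← Matrix.mul_assoc, trace_mul_comm _ X]
        simp only [Matrix.mul_assoc]
      rw [e, Matrix.trace, Complex.re_sum]
      refine Finset.sum_nonneg fun j _ => ?_
      have e2 : ((G * X)ᴴ * (c * X)).diag j
          = star (G *ᵥ X.col j) ⬝ᵥ (c *ᵥ X.col j) := by
        simp only [diag_apply, Matrix.mul_apply, dotProduct, conjTranspose_apply, Pi.star_apply,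
          mulVec, col_apply]
      rw [e2]
      refine hfdi _ _ (t j) ?_
      have e3 := congrArg (fun Z => Z.col j) hX
      have e4 : (X * diagonal fun i => Complex.I * (t i : ℂ)).col j
          = (Complex.I * (t j : ℂ)) • X.col j := by
        ext i; simp [mul_comm]
      rw [mulVec_mulVec, ← add_mulVec, ← e4, ← hX]
      ext i
      simp [Matrix.mul_apply, mulVec, dotProduct]
    have hTh : (fromBlocks (0 : Matrix n n ℂ) cᴴ c (0 : Matrix m m ℂ))ᴴ = fromBlocks 0 cᴴ c 0 := by
      rw [fromBlocks_conjTranspose]; simp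
    rw [← hVW _ hTh, fromBlocks_multiply, trace_fromBlocks_aux] at hTneg
    simp only [Matrix.mul_zero, zero_add, add_zero, Complex.add_re] at hTneg
    have e5 : (W21 * cᴴ).trace.re = (W12 * c).trace.re := by
      have : (W21 * cᴴ).trace = star (W12 * c).trace := by
        rw [← trace_conjTranspose, conjTranspose_mul, hh12, trace_mul_comm]
      rw [this]; simp
    linarith
end KYP


lemma herm_form_swap {n : Type*} [Fintype n] {P : Matrix n n ℂ} (hPh : Pᴴ = P)
    (x y : n → ℂ) : star x ⬝ᵥ (P *ᵥ y) = star (star y ⬝ᵥ (P *ᵥ x)) := by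
  rw [star_dotProduct, star_mulVec, hPh, dotProduct_mulVec]

/-- orthogonal projection with respect to a form positive on `U` -/
lemma form_proj {n : ℕ} (P : Matrix (Fin n) (Fin n) ℂ) (hPh : Pᴴ = P)
    (U : Submodule ℂ (Fin n → ℂ)) (hU : ∀ x ∈ U, x ≠ 0 → 0 < (star x ⬝ᵥ (P *ᵥ x)).re)
    (x : Fin n → ℂ) : ∃ u ∈ U, ∀ z ∈ U, star z ⬝ᵥ (P *ᵥ (x - u)) = 0 := by
  classical
  let b := Module.finBasis ℂ U
  set V : Matrix (Fin n) (Fin (Module.finrank ℂ U)) ℂ :=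
    Matrix.of fun i j => (b j : Fin n → ℂ) i with hV
  have hVc : ∀ c, V *ᵥ c = ((∑ j, c j • b j : U) : Fin n → ℂ) := by
    intro c
    ext i
    simp [hV, mulVec, dotProduct, mul_comm]
  have hVm : ∀ c, V *ᵥ c ∈ U := fun c => by rw [hVc]; exact Subtype.property _
  have hVs : ∀ z ∈ U, ∃ c, z = V *ᵥ c := by
    intro z hz
    refine ⟨fun j => b.repr ⟨z, hz⟩ j, ?_⟩
    rw [hVc, b.sum_repr]
  have hVinj : ∀ c, V *ᵥ c = 0 → c = 0 := by
    intro c hc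
    rw [hVc] at hc
    have h0 : (∑ j, c j • b j : U) = 0 := by ext1; exact hc
    have := Fintype.linearIndependent_iff.mp b.linearIndependent c h0
    ext j; exact this j
  set G := Vᴴ * P * V with hG
  have hGq : ∀ c, G *ᵥ c = 0 → c = 0 := by
    intro c hc
    by_contra hne
    have h1 := hU (V *ᵥ c) (hVm c) (fun h => hne (hVinj c h))
    have h2 : star (V *ᵥ c) ⬝ᵥ (P *ᵥ (V *ᵥ c)) = 0 := by
      rw [star_mulVec, ← dotProduct_mulVec, mulVec_mulVec, mulVec_mulVec, ← hG, hc]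
      simp
    rw [h2] at h1; simp at h1
  have hGu : IsUnit G := by
    rw [← mulVec_injective_iff_isUnit]
    intro c d hcd
    have := hGq (c - d) (by rw [mulVec_sub]; simpa [sub_eq_zero] using hcd)
    exact sub_eq_zero.mp this
  have hGd : IsUnit G.det := (isUnit_iff_isUnit_det G).mp hGu
  refine ⟨V *ᵥ (G⁻¹ *ᵥ (Vᴴ *ᵥ (P *ᵥ x))), hVm _, ?_⟩
  intro z hz
  obtain ⟨c, rfl⟩ := hVs z hz
  rw [star_mulVec, ← dotProduct_mulVec, mulVec_sub, mulVec_sub]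
  have : Vᴴ *ᵥ (P *ᵥ (V *ᵥ (G⁻¹ *ᵥ (Vᴴ *ᵥ (P *ᵥ x))))) = Vᴴ *ᵥ (P *ᵥ x) := by
    rw [mulVec_mulVec _ P V, mulVec_mulVec _ Vᴴ (P * V), ← Matrix.mul_assoc, ← hG,
      mulVec_mulVec _ G, Matrix.mul_nonsing_inv _ hGd, one_mulVec]
  rw [this, sub_self, dotProduct_zero]

lemma lyap_pos {n : ℕ} (a P : Matrix (Fin n) (Fin n) ℂ) (hPh : Pᴴ = P)
    (hN : (-(P * a + aᴴ * P)).PosSemidef)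
    (hinj : ∀ x, P *ᵥ x = 0 → x = 0)
    (heig : ∀ μ : ℂ, 0 < μ.re → IsUnit (μ • (1 : Matrix (Fin n) (Fin n) ℂ) - a))
    (himag : ∀ (x : Fin n → ℂ) (ω : ℝ), x ≠ 0 → a *ᵥ x = (Complex.I * ω) • x →
      0 < (star x ⬝ᵥ (P *ᵥ x)).re) :
    ∀ x, x ≠ 0 → 0 < (star x ⬝ᵥ (P *ᵥ x)).re := by
  classical
  let T : Set (Submodule ℂ (Fin n → ℂ)) := {U | (∀ x ∈ U, a *ᵥ x ∈ U) ∧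
    ∀ x ∈ U, x ≠ 0 → 0 < (star x ⬝ᵥ (P *ᵥ x)).re}
  have hTne : T.Nonempty := ⟨⊥, by
    refine ⟨fun x hx => ?_, fun x hx hx0 => absurd ((Submodule.mem_bot ℂ).mp hx) hx0⟩
    rw [Submodule.mem_bot] at hx ⊢
    rw [hx, mulVec_zero]⟩
  obtain ⟨U, ⟨hUa, hUp⟩, hUmax⟩ :=
    (wellFounded_gt : WellFounded ((· > ·) : Submodule ℂ (Fin n → ℂ) → _ → Prop)).has_min T hTne
  by_cases htop : U = ⊤
  · intro x hx
    exact hUp x (by rw [htop]; trivial) hx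
  exfalso
  -- eigenvector of the quotient
  obtain ⟨l, x0, hx0U, hx0⟩ : ∃ (l : ℂ) (x : Fin n → ℂ), x ∉ U ∧ a *ᵥ x - l • x ∈ U := by
    have hnt : Nontrivial ((Fin n → ℂ) ⧸ U) := Submodule.Quotient.nontrivial_iff.mpr htop
    have hle : U ≤ U.comap (Matrix.toLin' a) := fun x hx => by
      simpa using hUa x hx
    obtain ⟨l, hl⟩ := Module.End.exists_eigenvalue (K := ℂ) (U.mapQ U (Matrix.toLin' a) hle)
    obtain ⟨q, hq⟩ := hl.exists_hasEigenvector
    obtain ⟨x, rfl⟩ := U.mkQ_surjective q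
    refine ⟨l, x, ?_, ?_⟩
    · intro hx
      exact hq.2 (by simpa using hx)
    · have := hq.apply_eq_smul
      rw [← map_smul, Submodule.mkQ_apply, Submodule.mkQ_apply, Submodule.mapQ_apply,
        Submodule.Quotient.eq] at this
      simpa using this
  obtain ⟨u0, hu0, horth⟩ := form_proj P hPh U hUp x0
  set x := x0 - u0 with hx
  have hxU : x ∉ U := fun h => hx0U (by
    have := U.add_mem h hu0
    simpa [hx] using this)
  have hxne : x ≠ 0 := fun h => hxU (h ▸ U.zero_mem)
  set w := a *ᵥ x - l • x with hw
  have hwU : w ∈ U := by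
    have e : w = (a *ᵥ x0 - l • x0) - (a *ᵥ u0 - l • u0) := by
      rw [hw, hx, mulVec_sub, smul_sub]; abel
    rw [e]
    exact U.sub_mem hx0 (U.sub_mem (hUa _ hu0) (U.smul_mem _ hu0))
  have hax : a *ᵥ x = l • x + w := by rw [hw]; abel
  have hlre : l.re ≤ 0 := by
    by_contra hpos
    push Not at hpos
    have hun := heig l hpos
    have hinjL : ∀ y, (l • (1 : Matrix (Fin n) (Fin n) ℂ) - a) *ᵥ y = 0 → y = 0 := by
      intro y hy
      have := mulVec_injective_iff_isUnit.mpr hun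
      exact this (by simpa using hy)
    let L := Matrix.toLin' (l • (1 : Matrix (Fin n) (Fin n) ℂ) - a)
    have hLap : ∀ y, L y = l • y - a *ᵥ y := by
      intro y; simp [L, sub_mulVec, smul_mulVec]
    have hLU : ∀ y ∈ U, L y ∈ U := by
      intro y hy
      rw [hLap]
      exact U.sub_mem (U.smul_mem _ hy) (hUa _ hy)
    have hi : Function.Injective (L.restrict hLU) := by
      rw [injective_iff_map_eq_zero]
      intro y hy
      have h1 : L (y : Fin n → ℂ) = 0 := by
        have := congrArg Subtype.val hy
        simpa using this
      ext1
      exact hinjL _ (by rw [← Matrix.toLin'_apply]; exact h1)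
    have hs := LinearMap.injective_iff_surjective.mp hi
    have hLx : L x ∈ U := by
      rw [hLap, hax]
      have : l • x - (l • x + w) = -w := by abel
      rw [this]; exact U.neg_mem hwU
    obtain ⟨y, hy⟩ := hs ⟨L x, hLx⟩
    have hy' : L (y : Fin n → ℂ) = L x := by
      have := congrArg Subtype.val hy
      simpa using this
    have : (y : Fin n → ℂ) - x = 0 := hinjL _ (by
      have : L ((y : Fin n → ℂ) - x) = 0 := by rw [map_sub, hy', sub_self]
      rw [← Matrix.toLin'_apply]; exact this)
    exact hxU (by rw [← sub_eq_zero.mp this]; exact y.2)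
  have horth' : ∀ z ∈ U, star x ⬝ᵥ (P *ᵥ z) = 0 := by
    intro z hz
    rw [herm_form_swap hPh, horth z hz, star_zero]
  -- the value of the quadratic form of N
  have hform : ∀ z y : Fin n → ℂ, star z ⬝ᵥ ((-(P * a + aᴴ * P)) *ᵥ y)
      = -(star z ⬝ᵥ (P *ᵥ (a *ᵥ y)) + star (a *ᵥ z) ⬝ᵥ (P *ᵥ y)) := by
    intro z y
    rw [neg_mulVec, add_mulVec, dotProduct_neg, dotProduct_add, ← mulVec_mulVec, ← mulVec_mulVec,
      star_mulVec, ← dotProduct_mulVec]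
  have hq1 : star x ⬝ᵥ ((-(P * a + aᴴ * P)) *ᵥ x)
      = -((l + star l) * (star x ⬝ᵥ (P *ᵥ x))) := by
    rw [hform, hax, mulVec_add, dotProduct_add, horth' w hwU, star_add, add_dotProduct,
      horth w hwU, mulVec_smul, dotProduct_smul, star_smul, smul_dotProduct]
    simp only [smul_eq_mul]
    ring
  have him : (star x ⬝ᵥ (P *ᵥ x)).im = 0 := by
    have := herm_form_swap hPh x x
    have h2 := congrArg Complex.im this
    simp at h2
    linarith
  have hq2 : (star x ⬝ᵥ ((-(P * a + aᴴ * P)) *ᵥ x)).re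
      = -(2 * l.re * (star x ⬝ᵥ (P *ᵥ x)).re) := by
    rw [hq1]
    simp
    left; ring
  have hxpos : 0 < (star x ⬝ᵥ (P *ᵥ x)).re := by
    by_cases hz : star x ⬝ᵥ ((-(P * a + aᴴ * P)) *ᵥ x) = 0
    · have hNx := (hN.dotProduct_mulVec_zero_iff x).mp hz
      have hw0 : w = 0 := by
        by_contra hne
        have h1 := hform w x
        rw [hNx, dotProduct_zero, hax, mulVec_add, mulVec_smul, dotProduct_add, dotProduct_smul,
          horth w hwU, horth _ (hUa w hwU)] at h1
        have h2 := hUp w hwU hne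
        simp at h1
        rw [h1] at h2; simp at h2
      rw [hw0, add_zero] at hax
      have hleft : aᴴ *ᵥ (P *ᵥ x) = (-l) • (P *ᵥ x) := by
        rw [neg_mulVec, add_mulVec, ← mulVec_mulVec, ← mulVec_mulVec, hax, mulVec_smul,
          neg_eq_zero] at hNx
        rw [neg_smul]
        exact eq_neg_of_add_eq_zero_right hNx
      have hl0 : l.re = 0 := by
        by_contra hne
        have hneg : 0 < (-star l).re := by
          simp; exact lt_of_le_of_ne hlre hne
        have hun := heig _ hneg
        have hun2 : IsUnit (((-star l) • (1 : Matrix (Fin n) (Fin n) ℂ) - a)ᴴ) := by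
          have := hun.star
          rwa [star_eq_conjTranspose] at this
        have hinj2 := mulVec_injective_iff_isUnit.mpr hun2
        have : P *ᵥ x = 0 := hinj2 (by
          rw [mulVec_zero, conjTranspose_sub, conjTranspose_smul, conjTranspose_one, sub_mulVec, hleft,
            smul_mulVec, one_mulVec]
          simp)
        exact hxne (hinj x this)
      refine himag x l.im hxne ?_
      rw [hax]
      congr 1
      apply Complex.ext <;> simp [hl0]
    · have h0 := hN.dotProduct_mulVec_nonneg x
      have h1 : 0 < star x ⬝ᵥ ((-(P * a + aᴴ * P)) *ᵥ x) := lt_of_le_of_ne h0 (Ne.symm hz)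
      have h2 := (Complex.lt_def.mp h1).1
      rw [hq2] at h2
      simp only [Complex.zero_re] at h2
      nlinarith
  -- enlarge U
  refine hUmax (U ⊔ Submodule.span ℂ {x}) ⟨?_, ?_⟩ ?_
  · intro y hy
    obtain ⟨u, hu, y', hy', rfl⟩ := Submodule.mem_sup.mp hy
    obtain ⟨t, rfl⟩ := Submodule.mem_span_singleton.mp hy'
    rw [mulVec_add, mulVec_smul, hax]
    have : a *ᵥ u + t • (l • x + w) = (a *ᵥ u + t • w) + (t * l) • x := by
      rw [smul_add, smul_smul]; abel
    rw [this]
    exact Submodule.add_mem_sup (U.add_mem (hUa u hu) (U.smul_mem _ hwU))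
      (Submodule.smul_mem _ _ (Submodule.mem_span_singleton_self x))
  · intro y hy hy0
    obtain ⟨u, hu, y', hy', rfl⟩ := Submodule.mem_sup.mp hy
    obtain ⟨t, rfl⟩ := Submodule.mem_span_singleton.mp hy'
    have e : star (u + t • x) ⬝ᵥ (P *ᵥ (u + t • x))
        = star u ⬝ᵥ (P *ᵥ u) + (star t * t) * (star x ⬝ᵥ (P *ᵥ x)) := by
      rw [mulVec_add, mulVec_smul, star_add, star_smul, add_dotProduct, dotProduct_add,
        dotProduct_add, smul_dotProduct, smul_dotProduct, dotProduct_smul, dotProduct_smul,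
        horth u hu, horth' u hu]
      simp only [smul_eq_mul]
      ring
    have e2 : ((star t * t) * (star x ⬝ᵥ (P *ᵥ x))).re
        = Complex.normSq t * (star x ⬝ᵥ (P *ᵥ x)).re := by
      have : star t * t = (Complex.normSq t : ℂ) := by
        rw [Complex.star_def, mul_comm, Complex.mul_conj]
      rw [this, Complex.re_ofReal_mul]
    rw [e, Complex.add_re, e2]
    by_cases ht : t = 0
    · subst ht
      simp only [map_zero, zero_mul, add_zero]
      exact hUp u hu (by simpa using hy0)
    · have h1 : 0 < Complex.normSq t * (star x ⬝ᵥ (P *ᵥ x)).re :=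
        mul_pos (Complex.normSq_pos.mpr ht) hxpos
      have h2 : 0 ≤ (star u ⬝ᵥ (P *ᵥ u)).re := by
        by_cases hu0 : u = 0
        · simp [hu0]
        · exact (hUp u hu hu0).le
      linarith
  · refine lt_of_le_of_ne le_sup_left ?_
    intro h
    apply hxU
    rw [h]
    exact Submodule.mem_sup_right (Submodule.mem_span_singleton_self x)


lemma notMem_eigs {k : Type*} [Fintype k] [DecidableEq k] (A : Matrix k k ℝ) (s : ℂ) :
    s ∉ eigs A ↔ IsUnit (s • (1 : Matrix k k ℂ) - A.map Complex.ofReal) := by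
  rw [eigs, spectrum.notMem_iff, Algebra.algebraMap_eq_smul_one]

lemma right_inv_of_rank {n : ℕ} {p : Type*} [Fintype p] [DecidableEq p]
    (M : Matrix (Fin n) p ℝ) (h : M.rank = n) : ∃ N : Matrix p (Fin n) ℝ, M * N = 1 := by
  rw [← Matrix.mulVec_surjective_iff_exists_right_inverse]
  have : LinearMap.range M.mulVecLin = ⊤ := by
    apply Submodule.eq_top_of_finrank_eq
    rw [Matrix.rank] at h
    rw [h]; simp
  exact LinearMap.range_eq_top.mp this

lemma map_mul_ofReal {l m n : Type*} [Fintype m] (M : Matrix l m ℝ) (N : Matrix m n ℝ) :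
    (M * N).map Complex.ofReal = M.map Complex.ofReal * N.map Complex.ofReal :=
  Matrix.map_mul (f := Complex.ofRealHom)

lemma map_pow_ofReal {m : Type*} [Fintype m] [DecidableEq m] (M : Matrix m m ℝ) (k : ℕ) :
    (M ^ k).map Complex.ofReal = (M.map Complex.ofReal) ^ k :=
  Matrix.map_pow M Complex.ofRealHom k

lemma map_sum_ofReal {l m : Type*} {N : ℕ} (M : Fin N → Matrix l m ℝ) :
    (∑ k, M k).map Complex.ofReal = ∑ k, (M k).map Complex.ofReal := by
  ext i j
  simp [Matrix.sum_apply]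

lemma map_one_ofReal {m : Type*} [DecidableEq m] :
    (1 : Matrix m m ℝ).map Complex.ofReal = 1 := by
  ext i j
  by_cases h : i = j <;> simp [Matrix.one_apply, h]

lemma ctrl_right_inv {n m : ℕ} (A : Matrix (Fin n) (Fin n) ℝ) (B : Matrix (Fin n) (Fin m) ℝ)
    (C : Matrix (Fin m) (Fin n) ℝ) (h : IsMinimal A B C) :
    ∃ Q : Fin n → Matrix (Fin m) (Fin n) ℂ,
      ∑ k : Fin n, (A.map Complex.ofReal) ^ (k : ℕ) * B.map Complex.ofReal * Q k = 1 := by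
  obtain ⟨N, hN⟩ := right_inv_of_rank _ h.1
  refine ⟨fun k => (Matrix.of fun i j => N (k, i) j).map Complex.ofReal, ?_⟩
  simp only [← map_pow_ofReal, ← map_mul_ofReal]
  rw [← map_sum_ofReal, ← map_one_ofReal]
  congr 1
  rw [← hN]
  ext i j
  simp only [Matrix.sum_apply, Matrix.mul_apply, Matrix.of_apply, Fintype.sum_prod_type]

lemma obs_left_inv {n m : ℕ} (A : Matrix (Fin n) (Fin n) ℝ) (B : Matrix (Fin n) (Fin m) ℝ)
    (C : Matrix (Fin m) (Fin n) ℝ) (h : IsMinimal A B C) :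
    ∃ O : Fin n → Matrix (Fin n) (Fin m) ℂ,
      ∑ k : Fin n, O k * (C.map Complex.ofReal * (A.map Complex.ofReal) ^ (k : ℕ)) = 1 := by
  have h2 := h.2
  rw [← Matrix.rank_transpose] at h2
  obtain ⟨N, hN⟩ := right_inv_of_rank _ h2
  have hN2 := congrArg Matrix.transpose hN
  rw [Matrix.transpose_mul, Matrix.transpose_transpose, Matrix.transpose_one] at hN2
  refine ⟨fun k => (Matrix.of fun i j => N (k, j) i).map Complex.ofReal, ?_⟩
  simp only [← map_pow_ofReal, ← map_mul_ofReal]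
  rw [← map_sum_ofReal, ← map_one_ofReal]
  congr 1
  rw [← hN2]
  ext i j
  simp only [Matrix.sum_apply, Matrix.mul_apply, Matrix.of_apply, Fintype.sum_prod_type,
    Matrix.transpose_apply]

lemma resolvent_eventually {n : ℕ} (a : Matrix (Fin n) (Fin n) ℂ) (l : ℂ) :
    ∀ᶠ s in 𝓝[≠] l, IsUnit (s • (1 : Matrix (Fin n) (Fin n) ℂ) - a) := by
  have hf : (spectrum ℂ a).Finite := Matrix.finite_spectrum a
  have h2 : ((spectrum ℂ a) \ {l}).Finite := hf.subset Set.sdiff_subset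
  have h3 : ∀ᶠ s in 𝓝 l, s ∉ (spectrum ℂ a) \ {l} :=
    h2.isClosed.isOpen_compl.eventually_mem (by simp)
  filter_upwards [h3.filter_mono nhdsWithin_le_nhds, self_mem_nhdsWithin] with s hs hne
  have : s ∉ spectrum ℂ a := fun h => hs ⟨h, hne⟩
  rwa [spectrum.notMem_iff, Algebra.algebraMap_eq_smul_one] at this

section
variable {n m : ℕ}

lemma X_mul_a (a : Matrix (Fin n) (Fin n) ℂ) (l s : ℂ)
    (hs : IsUnit (s • (1 : Matrix (Fin n) (Fin n) ℂ) - a)) :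
    ((s - l) • (s • (1 : Matrix (Fin n) (Fin n) ℂ) - a)⁻¹) * a
      = s • ((s - l) • (s • (1 : Matrix (Fin n) (Fin n) ℂ) - a)⁻¹) - (s - l) • 1 := by
  have h := Matrix.nonsing_inv_mul _ ((Matrix.isUnit_iff_isUnit_det _).mp hs)
  have e : a = s • (1 : Matrix (Fin n) (Fin n) ℂ) - (s • (1 : Matrix (Fin n) (Fin n) ℂ) - a) := by
    abel
  conv_lhs => rw [e, Matrix.mul_sub, ← e]
  rw [Matrix.smul_mul _ _ (s • (1 : Matrix (Fin n) (Fin n) ℂ) - a), h, Matrix.mul_smul,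
    Matrix.mul_one]

lemma a_mul_X (a : Matrix (Fin n) (Fin n) ℂ) (l s : ℂ)
    (hs : IsUnit (s • (1 : Matrix (Fin n) (Fin n) ℂ) - a)) :
    a * ((s - l) • (s • (1 : Matrix (Fin n) (Fin n) ℂ) - a)⁻¹)
      = s • ((s - l) • (s • (1 : Matrix (Fin n) (Fin n) ℂ) - a)⁻¹) - (s - l) • 1 := by
  have h := Matrix.mul_nonsing_inv _ ((Matrix.isUnit_iff_isUnit_det _).mp hs)
  have e : a = s • (1 : Matrix (Fin n) (Fin n) ℂ) - (s • (1 : Matrix (Fin n) (Fin n) ℂ) - a) := by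
    abel
  conv_lhs => rw [e, Matrix.sub_mul, ← e]
  rw [Matrix.mul_smul (s • (1 : Matrix (Fin n) (Fin n) ℂ) - a), h, Matrix.smul_mul,
    Matrix.one_mul]

lemma tendsto_sub_zero (l : ℂ) : Tendsto (fun s : ℂ => s - l) (𝓝[≠] l) (𝓝 0) := by
  have : Tendsto (fun s : ℂ => s - l) (𝓝 l) (𝓝 (l - l)) := by
    exact tendsto_id.sub tendsto_const_nhds
  rw [sub_self] at this
  exact this.mono_left nhdsWithin_le_nhds

lemma tendsto_id' (l : ℂ) : Tendsto (fun s : ℂ => s) (𝓝[≠] l) (𝓝 l) :=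
  (tendsto_id : Tendsto id (𝓝 l) (𝓝 l)).mono_left nhdsWithin_le_nhds

lemma pole_limit (a : Matrix (Fin n) (Fin n) ℂ) (b : Matrix (Fin n) (Fin m) ℂ)
    (c : Matrix (Fin m) (Fin n) ℂ) (l : ℂ) (Q : Fin n → Matrix (Fin m) (Fin n) ℂ)
    (O : Fin n → Matrix (Fin n) (Fin m) ℂ)
    (hQ : ∑ k : Fin n, a ^ (k : ℕ) * b * Q k = 1)
    (hO : ∑ k : Fin n, O k * (c * a ^ (k : ℕ)) = 1)
    (K : Matrix (Fin m) (Fin m) ℂ)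
    (hK : Tendsto (fun s : ℂ => c * ((s - l) • (s • (1 : Matrix (Fin n) (Fin n) ℂ) - a)⁻¹) * b)
      (𝓝[≠] l) (𝓝 K)) :
    ∃ Z : Matrix (Fin n) (Fin n) ℂ,
      Tendsto (fun s : ℂ => (s - l) • (s • (1 : Matrix (Fin n) (Fin n) ℂ) - a)⁻¹) (𝓝[≠] l) (𝓝 Z) := by
  set X : ℂ → Matrix (Fin n) (Fin n) ℂ :=
    fun s => (s - l) • (s • (1 : Matrix (Fin n) (Fin n) ℂ) - a)⁻¹ with hX
  have h0 := tendsto_sub_zero l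
  have hid := tendsto_id' l
  have h1 : ∀ k : ℕ, Tendsto (fun s => c * X s * (a ^ k * b)) (𝓝[≠] l) (𝓝 (l ^ k • K)) := by
    intro k
    induction k with
    | zero => simp only [pow_zero, one_smul, Matrix.one_mul]; exact hK
    | succ k ih =>
      have : Tendsto (fun s => s • (c * X s * (a ^ k * b)) - (s - l) • (c * (a ^ k * b))) (𝓝[≠] l)
          (𝓝 (l • l ^ k • K - (0 : ℂ) • (c * (a ^ k * b)))) :=
        (hid.smul ih).sub (h0.smul tendsto_const_nhds)
      rw [zero_smul, sub_zero, smul_smul, ← pow_succ'] at this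
      refine this.congr' ?_
      filter_upwards [resolvent_eventually a l] with s hs
      have e : X s * a = s • X s - (s - l) • 1 := X_mul_a a l s hs
      have e2 : c * X s * (a ^ (k+1) * b) = c * (X s * a) * (a ^ k * b) := by
        simp only [pow_succ', Matrix.mul_assoc]
      rw [e2, e]
      simp only [Matrix.mul_sub, Matrix.sub_mul, Matrix.mul_smul, Matrix.smul_mul, Matrix.mul_one]
  have h2 : ∀ i k : ℕ, Tendsto (fun s => c * a ^ i * X s * (a ^ k * b)) (𝓝[≠] l)
      (𝓝 (l ^ i • l ^ k • K)) := by
    intro i k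
    induction i with
    | zero => simpa using h1 k
    | succ i ih =>
      have : Tendsto (fun s => s • (c * a ^ i * X s * (a ^ k * b))
            - (s - l) • (c * a ^ i * (a ^ k * b))) (𝓝[≠] l)
          (𝓝 (l • l ^ i • l ^ k • K - (0 : ℂ) • (c * a ^ i * (a ^ k * b)))) :=
        (hid.smul ih).sub (h0.smul tendsto_const_nhds)
      rw [zero_smul, sub_zero, smul_smul, ← pow_succ'] at this
      refine this.congr' ?_
      filter_upwards [resolvent_eventually a l] with s hs
      have e : a * X s = s • X s - (s - l) • 1 := a_mul_X a l s hs
      have e2 : c * a ^ (i+1) * X s * (a ^ k * b) = c * a ^ i * (a * X s) * (a ^ k * b) := by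
        simp only [pow_succ, Matrix.mul_assoc]
      rw [e2, e]
      simp only [Matrix.mul_sub, Matrix.sub_mul, Matrix.mul_smul, Matrix.smul_mul, Matrix.mul_one]
  have h3 : Tendsto (fun s => ∑ i : Fin n, ∑ k : Fin n,
      O i * (c * a ^ (i : ℕ) * X s * (a ^ (k : ℕ) * b)) * Q k) (𝓝[≠] l)
      (𝓝 (∑ i : Fin n, ∑ k : Fin n, O i * (l ^ (i : ℕ) • l ^ (k : ℕ) • K) * Q k)) := by
    refine tendsto_finsetSum _ fun i _ => tendsto_finsetSum _ fun k _ => ?_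
    have hc : Continuous fun M : Matrix (Fin m) (Fin m) ℂ => O i * M * Q k := by fun_prop
    exact (hc.tendsto _).comp (h2 i k)
  refine ⟨_, h3.congr fun s => ?_⟩
  have : X s = (∑ k : Fin n, O k * (c * a ^ (k : ℕ))) * X s * ∑ k : Fin n, a ^ (k : ℕ) * b * Q k := by
    rw [hO, hQ, Matrix.one_mul, Matrix.mul_one]
  refine Eq.trans ?_ this.symm
  rw [Matrix.sum_mul, Matrix.sum_mul]
  refine Finset.sum_congr rfl fun i _ => ?_
  rw [Matrix.mul_sum]
  refine Finset.sum_congr rfl fun k _ => ?_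
  simp only [Matrix.mul_assoc]

lemma pole_props (a : Matrix (Fin n) (Fin n) ℂ) (l : ℂ) (Z : Matrix (Fin n) (Fin n) ℂ)
    (hZ : Tendsto (fun s : ℂ => (s - l) • (s • (1 : Matrix (Fin n) (Fin n) ℂ) - a)⁻¹) (𝓝[≠] l) (𝓝 Z)) :
    a * Z = l • Z ∧ Z * a = l • Z ∧ (∀ x, a *ᵥ x = l • x → Z *ᵥ x = x) ∧
      ∀ p, p ᵥ* a = l • p → p ᵥ* Z = p := by
  have h0 := tendsto_sub_zero l
  have hid := tendsto_id' l
  set X : ℂ → Matrix (Fin n) (Fin n) ℂ :=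
    fun s => (s - l) • (s • (1 : Matrix (Fin n) (Fin n) ℂ) - a)⁻¹ with hX
  have hr : Tendsto (fun s => s • X s - (s - l) • (1 : Matrix (Fin n) (Fin n) ℂ)) (𝓝[≠] l)
      (𝓝 (l • Z)) := by
    have : Tendsto (fun s => s • X s - (s - l) • (1 : Matrix (Fin n) (Fin n) ℂ)) (𝓝[≠] l)
      (𝓝 (l • Z - (0 : ℂ) • (1 : Matrix (Fin n) (Fin n) ℂ))) :=
        (hid.smul hZ).sub (h0.smul tendsto_const_nhds)
    simpa using this
  refine ⟨?_, ?_, ?_, ?_⟩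
  · have hc : Continuous fun M : Matrix (Fin n) (Fin n) ℂ => a * M := by fun_prop
    refine tendsto_nhds_unique (((hc.tendsto Z).comp hZ).congr' ?_) hr
    filter_upwards [resolvent_eventually a l] with s hs
    exact a_mul_X a l s hs
  · have hc : Continuous fun M : Matrix (Fin n) (Fin n) ℂ => M * a := by fun_prop
    refine tendsto_nhds_unique (((hc.tendsto Z).comp hZ).congr' ?_) hr
    filter_upwards [resolvent_eventually a l] with s hs
    exact X_mul_a a l s hs
  · intro x hx
    have hc : Continuous fun M : Matrix (Fin n) (Fin n) ℂ => M *ᵥ x := by fun_prop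
    refine tendsto_nhds_unique (((hc.tendsto Z).comp hZ).congr' ?_)
      (tendsto_const_nhds (x := x))
    filter_upwards [resolvent_eventually a l] with s hs
    have hi := Matrix.nonsing_inv_mul _ ((Matrix.isUnit_iff_isUnit_det _).mp hs)
    have e : (s - l) • x = (s • (1 : Matrix (Fin n) (Fin n) ℂ) - a) *ᵥ x := by
      rw [sub_mulVec, smul_mulVec, one_mulVec, hx, sub_smul]
    show X s *ᵥ x = x
    rw [hX]
    show ((s - l) • (s • (1 : Matrix (Fin n) (Fin n) ℂ) - a)⁻¹) *ᵥ x = x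
    rw [smul_mulVec, ← mulVec_smul, e, mulVec_mulVec, hi, one_mulVec]
  · intro x hx
    have hc : Continuous fun M : Matrix (Fin n) (Fin n) ℂ => x ᵥ* M := by fun_prop
    refine tendsto_nhds_unique (((hc.tendsto Z).comp hZ).congr' ?_)
      (tendsto_const_nhds (x := x))
    filter_upwards [resolvent_eventually a l] with s hs
    have hi := Matrix.mul_nonsing_inv _ ((Matrix.isUnit_iff_isUnit_det _).mp hs)
    have e : (s - l) • x = x ᵥ* (s • (1 : Matrix (Fin n) (Fin n) ℂ) - a) := by
      rw [vecMul_sub, vecMul_smul, vecMul_one, hx, sub_smul]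
    show x ᵥ* X s = x
    rw [hX]
    show x ᵥ* ((s - l) • (s • (1 : Matrix (Fin n) (Fin n) ℂ) - a)⁻¹) = x
    rw [vecMul_smul, ← smul_vecMul, e, vecMul_vecMul, hi, vecMul_one]

end


lemma tendsto_matrix_inv {n : ℕ} {α : Type*} {f : Filter α} {M : α → Matrix (Fin n) (Fin n) ℂ}
    {M0 : Matrix (Fin n) (Fin n) ℂ} (h : Tendsto M f (𝓝 M0)) (hu : IsUnit M0) :
    Tendsto (fun x => (M x)⁻¹) f (𝓝 (M0⁻¹)) := by
  have hd : M0.det ≠ 0 := ((Matrix.isUnit_iff_isUnit_det _).mp hu).ne_zero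
  have : ContinuousAt Inv.inv M0 := continuousAt_matrix_inv _ (by
    have e : (Ring.inverse : ℂ → ℂ) = Inv.inv := by
      funext x; exact Ring.inverse_eq_inv x
    rw [e]; exact continuousAt_inv₀ hd)
  exact this.tendsto.comp h

lemma eventually_isUnit {n : ℕ} {α : Type*} {f : Filter α} {M : α → Matrix (Fin n) (Fin n) ℂ}
    {M0 : Matrix (Fin n) (Fin n) ℂ} (h : Tendsto M f (𝓝 M0)) (hu : IsUnit M0) :
    ∀ᶠ x in f, IsUnit (M x) := by
  have hd : M0.det ≠ 0 := ((Matrix.isUnit_iff_isUnit_det _).mp hu).ne_zero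
  have hc : Continuous fun M : Matrix (Fin n) (Fin n) ℂ => M.det := by fun_prop
  have := ((hc.tendsto M0).comp h).eventually_ne hd
  filter_upwards [this] with x hx
  exact (Matrix.isUnit_iff_isUnit_det _).mpr (isUnit_iff_ne_zero.mpr hx)

lemma dissip_limit {n : ℕ} (N : Matrix (Fin n) (Fin n) ℂ) (hN : (-(N + Nᴴ)).PosSemidef) :
    ∃ Z : Matrix (Fin n) (Fin n) ℂ, Z.PosSemidef ∧
      Tendsto (fun t : ℂ => t • (t • (1 : Matrix (Fin n) (Fin n) ℂ) - N)⁻¹) (𝓝[≠] 0) (𝓝 Z) := by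
  obtain ⟨R, S, hR, hS, hRR, hRS, hRSR⟩ := psd_pinv (posSemidef_conjTranspose_mul_self N)
  set Z : Matrix (Fin n) (Fin n) ℂ := 1 - R * S with hZ
  have hZh : Zᴴ = Z := by
    rw [hZ, conjTranspose_sub, conjTranspose_one, conjTranspose_mul, hR, hS, hRS]
  have hRZ : R * Z = 0 := by
    rw [hZ, Matrix.mul_sub, Matrix.mul_one, hRS, ← Matrix.mul_assoc, hRSR, sub_self]
  have hZZ : Z * Z = Z := by
    nth_rewrite 1 [hZ]
    rw [Matrix.sub_mul, Matrix.one_mul, hRS, Matrix.mul_assoc, hRZ, Matrix.mul_zero, sub_zero]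
  have hNZ : N * Z = 0 := by
    rw [← Matrix.conjTranspose_mul_self_mul_eq_zero, ← hRR, Matrix.mul_assoc, hRZ, Matrix.mul_zero]
  have hNZ2 : Nᴴ * Z = 0 := by
    apply Matrix.ext_of_mulVec_single
    intro i
    rw [zero_mulVec]
    set y := Z *ᵥ Pi.single i (1:ℂ) with hy
    have hNy : N *ᵥ y = 0 := by rw [hy, mulVec_mulVec, hNZ, zero_mulVec]
    have h1 : star y ⬝ᵥ ((-(N + Nᴴ)) *ᵥ y) = 0 := by
      rw [neg_mulVec, add_mulVec, hNy, zero_add, dotProduct_neg, dotProduct_mulVec,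
        ← star_mulVec, hNy]
      simp
    have h2 := (hN.dotProduct_mulVec_zero_iff y).mp h1
    rw [neg_mulVec, add_mulVec, hNy, zero_add, neg_eq_zero] at h2
    rw [← mulVec_mulVec]; exact h2
  have hZN : Z * N = 0 := by
    have := congrArg conjTranspose hNZ2
    rwa [conjTranspose_mul, conjTranspose_conjTranspose, hZh, conjTranspose_zero] at this
  have hun : IsUnit (Z - N) := by
    rw [← mulVec_injective_iff_isUnit]
    rw [← Matrix.coe_mulVecLin, injective_iff_map_eq_zero]
    intro x hx
    rw [Matrix.mulVecLin_apply] at hx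
    have h1 : Z *ᵥ x = 0 := by
      have := congrArg (fun v => Z *ᵥ v) hx
      simp only [mulVec_mulVec, Matrix.mul_sub, hZZ, hZN, sub_zero, mulVec_zero] at this
      exact this
    have h2 : N *ᵥ x = 0 := by
      rw [sub_mulVec, h1, zero_sub, neg_eq_zero] at hx; exact hx
    have h3 : R *ᵥ x = 0 := by
      have h4 : (Rᴴ * R) *ᵥ x = 0 := by
        rw [hR, hRR, ← mulVec_mulVec, h2, mulVec_zero]
      exact (Matrix.conjTranspose_mul_self_mulVec_eq_zero R x).mp h4
    rw [hZ, hRS, sub_mulVec, one_mulVec, ← mulVec_mulVec, h3, mulVec_zero, sub_zero] at h1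
    exact h1
  clear_value Z
  refine ⟨Z, ?_, ?_⟩
  · have := posSemidef_conjTranspose_mul_self Z
    rwa [hZh, hZZ] at this
  have hid : Tendsto (fun t : ℂ => t) (𝓝[≠] 0) (𝓝 0) := tendsto_id' 0
  have hM : Tendsto (fun t : ℂ => t • (1 - Z) + (Z - N)) (𝓝[≠] 0) (𝓝 (Z - N)) := by
    have := (hid.smul (tendsto_const_nhds (x := (1 - Z)))).add (tendsto_const_nhds (x := Z - N))
    simpa using this
  have hMi := tendsto_matrix_inv hM hun
  have hlim : Tendsto (fun t : ℂ => Z + t • ((1 - Z) * (t • (1 - Z) + (Z - N))⁻¹)) (𝓝[≠] 0)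
      (𝓝 Z) := by
    have hc : Continuous fun M : Matrix (Fin n) (Fin n) ℂ => (1 - Z) * M := by fun_prop
    have := (tendsto_const_nhds (x := Z)).add (hid.smul ((hc.tendsto _).comp hMi))
    simpa using this
  refine hlim.congr' ?_
  filter_upwards [eventually_isUnit hM hun, self_mem_nhdsWithin] with t ht ht0
  have ht0 : t ≠ 0 := ht0
  set M := t • (1 - Z) + (Z - N) with hMd
  have hMinv : M * M⁻¹ = 1 := Matrix.mul_nonsing_inv _ ((Matrix.isUnit_iff_isUnit_det _).mp ht)
  have hZM : Z * M = Z := by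
    rw [hMd, Matrix.mul_add, Matrix.mul_smul, Matrix.mul_sub, Matrix.mul_sub, Matrix.mul_one, hZZ, hZN]
    simp
  have hZMi : Z * M⁻¹ = Z := by
    nth_rewrite 1 [← hZM]
    rw [Matrix.mul_assoc, hMinv, Matrix.mul_one]
  clear_value M
  have hM2 : (t • (1 : Matrix (Fin n) (Fin n) ℂ) - N) * (1 - Z) = M - Z := by
    rw [hMd, Matrix.sub_mul, Matrix.mul_sub N, hNZ, Matrix.smul_mul, Matrix.one_mul, Matrix.mul_one]
    abel
  have key : (t • (1 : Matrix (Fin n) (Fin n) ℂ) - N) * (Z + t • ((1 - Z) * M⁻¹)) = t • 1 := by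
    rw [Matrix.mul_add, Matrix.mul_smul, ← Matrix.mul_assoc, hM2, Matrix.sub_mul M Z, hMinv, hZMi,
      Matrix.sub_mul, hNZ, Matrix.smul_mul, Matrix.one_mul, smul_sub]
    abel
  have : (t • (1 : Matrix (Fin n) (Fin n) ℂ) - N)⁻¹ = t⁻¹ • (Z + t • ((1 - Z) * M⁻¹)) := by
    apply Matrix.inv_eq_right_inv
    rw [Matrix.mul_smul, key, smul_smul, inv_mul_cancel₀ ht0, one_smul]
  rw [this, smul_smul, mul_inv_cancel₀ ht0, one_smul]

lemma conjTranspose_map_ofReal {l m : Type*} (M : Matrix l m ℝ) :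
    (M.map Complex.ofReal)ᴴ = Mᵀ.map Complex.ofReal := by
  ext i j; simp

open scoped MatrixOrder in
lemma psd_map {n : ℕ} (M : Matrix (Fin n) (Fin n) ℝ) (h : M.PosSemidef) :
    (M.map Complex.ofReal).PosSemidef := by
  obtain ⟨B, hB⟩ := CStarAlgebra.nonneg_iff_eq_star_mul_self.mp h.nonneg
  rw [hB, map_mul_ofReal, star_eq_conjTranspose, conjTranspose_eq_transpose_of_trivial, ← conjTranspose_map_ofReal]
  exact posSemidef_conjTranspose_mul_self _

lemma isUnit_map_ofReal {n : ℕ} (M : Matrix (Fin n) (Fin n) ℝ) (h : IsUnit M) :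
    IsUnit (M.map Complex.ofReal) :=
  h.map (Complex.ofRealHom.mapMatrix)

section
variable {n m : ℕ}

lemma backward_i (a y : Matrix (Fin n) (Fin n) ℂ) (hy : y.PosSemidef) (hyu : IsUnit y)
    (hL : (-(a * y + y * aᴴ)).PosSemidef) (l : ℂ)
    (hl : ¬ IsUnit (l • (1 : Matrix (Fin n) (Fin n) ℂ) - a)) : l.re ≤ 0 := by
  have h1 : ((l • (1 : Matrix (Fin n) (Fin n) ℂ) - a)ᴴ).det = 0 := by
    by_contra hne
    have hu : IsUnit ((l • (1 : Matrix (Fin n) (Fin n) ℂ) - a)ᴴ) :=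
      (Matrix.isUnit_iff_isUnit_det _).mpr (isUnit_iff_ne_zero.mpr hne)
    have := hu.star
    rw [star_eq_conjTranspose, conjTranspose_conjTranspose] at this
    exact hl this
  obtain ⟨v, hv0, hv⟩ := Matrix.exists_mulVec_eq_zero_iff.mpr h1
  have hav : aᴴ *ᵥ v = star l • v := by
    rw [conjTranspose_sub, conjTranspose_smul, conjTranspose_one, sub_mulVec, smul_mulVec,
      one_mulVec, sub_eq_zero] at hv
    exact hv.symm
  have hva : ∀ z, star v ⬝ᵥ (a *ᵥ z) = l * (star v ⬝ᵥ z) := by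
    intro z
    have : star (aᴴ *ᵥ v) = star v ᵥ* a := by rw [star_mulVec, conjTranspose_conjTranspose]
    rw [dotProduct_mulVec, ← this, hav, star_smul, star_star, smul_dotProduct, smul_eq_mul]
  have h0 := hL.dotProduct_mulVec_nonneg v
  have e : star v ⬝ᵥ ((-(a * y + y * aᴴ)) *ᵥ v) = -((l + star l) * (star v ⬝ᵥ (y *ᵥ v))) := by
    rw [neg_mulVec, add_mulVec, dotProduct_neg, dotProduct_add, ← mulVec_mulVec, ← mulVec_mulVec,
      hva, hav, mulVec_smul, dotProduct_smul, smul_eq_mul]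
    ring
  rw [e] at h0
  have h2 : 0 < star v ⬝ᵥ (y *ᵥ v) := by
    refine lt_of_le_of_ne (hy.dotProduct_mulVec_nonneg v) fun h => hv0 ?_
    have := (hy.dotProduct_mulVec_zero_iff v).mp h.symm
    exact mulVec_injective_iff_isUnit.mpr hyu (by rw [this, mulVec_zero])
  have h3 := (Complex.lt_def.mp h2)
  have h4 := (Complex.le_def.mp h0).1
  simp [← h3.2] at h4
  have h5 := h3.1
  simp only [Complex.zero_re] at h5
  nlinarith

lemma backward_ii (a y : Matrix (Fin n) (Fin n) ℂ) (c : Matrix (Fin m) (Fin n) ℂ)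
    (d : Matrix (Fin m) (Fin m) ℂ) (hy : y.PosSemidef) (hd : dᴴ = d)
    (hL : (-(a * y + y * aᴴ)).PosSemidef) (w : ℝ) (hw : 0 < w)
    (hu : IsUnit ((Complex.I * w) • (1 : Matrix (Fin n) (Fin n) ℂ) - a)) :
    let T := c * ((Complex.I * w) • (1 : Matrix (Fin n) (Fin n) ℂ) - a)⁻¹ * (-(a * y * cᴴ)) + d
    (Complex.I • (T - Tᴴ)).PosSemidef := by
  intro T
  set s : ℂ := Complex.I * w with hs
  set E := s • (1 : Matrix (Fin n) (Fin n) ℂ) - a with hE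
  have hi := Matrix.nonsing_inv_mul _ ((Matrix.isUnit_iff_isUnit_det _).mp hu)
  have hi2 := Matrix.mul_nonsing_inv _ ((Matrix.isUnit_iff_isUnit_det _).mp hu)
  set F := E⁻¹ with hF
  have hFa : F * a = s • F - 1 := by
    have : a = s • (1 : Matrix (Fin n) (Fin n) ℂ) - E := by rw [hE]; abel
    rw [this, Matrix.mul_sub, hi, Matrix.mul_smul, Matrix.mul_one]
  have hT : T = -(s • (c * (F * y) * cᴴ)) + (c * y * cᴴ) + d := by
    have : T = -(c * (F * a) * y * cᴴ) + d := by
      simp only [T, Matrix.mul_neg, Matrix.mul_assoc]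
      rfl
    rw [this, hFa]
    simp only [Matrix.mul_sub, Matrix.sub_mul, Matrix.mul_smul, Matrix.smul_mul, Matrix.mul_one,
      Matrix.mul_assoc]
    abel
  have hyh : yᴴ = y := hy.isHermitian
  have hTh : Tᴴ = -(star s • (c * (y * Fᴴ) * cᴴ)) + (c * y * cᴴ) + d := by
    rw [hT]
    clear_value F
    simp only [conjTranspose_add, conjTranspose_neg, conjTranspose_smul, conjTranspose_mul,
      conjTranspose_conjTranspose, hyh, hd, Matrix.mul_assoc]
  have h1 : Complex.I * s = -w := by rw [hs, ← mul_assoc, Complex.I_mul_I]; ring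
  have h2 : Complex.I * star s = w := by
    rw [hs, star_mul]; simp
    rw [mul_comm (w : ℂ), ← mul_assoc, Complex.I_mul_I]; ring
  have h3 : Complex.I • (T - Tᴴ) = (w : ℂ) • (c * (F * y + y * Fᴴ) * cᴴ) := by
    have e : T - Tᴴ = star s • (c * (y * Fᴴ) * cᴴ) - s • (c * (F * y) * cᴴ) := by
      rw [hTh, hT]; abel
    rw [e, smul_sub, smul_smul, smul_smul, h1, h2, Matrix.mul_add, Matrix.add_mul, smul_add,
      neg_smul]
    abel
  have hss : star s = -s := by
    rw [hs, star_mul]; simp; ring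
  have hEh : Eᴴ = -s • 1 - aᴴ := by
    rw [hE, conjTranspose_sub, conjTranspose_smul, conjTranspose_one, hss]
  have hi3 : Eᴴ * Fᴴ = 1 := by
    rw [← conjTranspose_mul, hi, conjTranspose_one]
  have h4 : F * y + y * Fᴴ = F * (-(a * y + y * aᴴ)) * Fᴴ := by
    have e1 : -(a * y + y * aᴴ) = E * y + y * Eᴴ := by
      rw [hEh, hE, Matrix.sub_mul, Matrix.mul_sub, Matrix.smul_mul, Matrix.mul_smul,
        Matrix.one_mul, Matrix.mul_one, neg_smul]
      abel
    rw [e1, Matrix.mul_add, Matrix.add_mul, ← Matrix.mul_assoc F E, hi, Matrix.one_mul,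
      Matrix.mul_assoc F, Matrix.mul_assoc y, hi3, Matrix.mul_one]
    abel
  rw [h3, h4]
  have h5 := (hL.mul_mul_conjTranspose_same F).mul_mul_conjTranspose_same c
  exact h5.smul (by exact_mod_cast hw.le)

lemma backward_iii (a y : Matrix (Fin n) (Fin n) ℂ) (c : Matrix (Fin m) (Fin n) ℂ)
    (d : Matrix (Fin m) (Fin m) ℂ) (hy : y.PosSemidef) (hyu : IsUnit y)
    (hL : (-(a * y + y * aᴴ)).PosSemidef) (w : ℝ) (hw : 0 < w) :
    ∃ K : Matrix (Fin m) (Fin m) ℂ,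
      Tendsto (fun s : ℂ => (s - Complex.I * w) • Complex.I •
        (c * (s • (1 : Matrix (Fin n) (Fin n) ℂ) - a)⁻¹ * (-(a * y * cᴴ)) + d))
        (𝓝[≠] (Complex.I * w)) (𝓝 K) ∧ K.PosSemidef := by
  obtain ⟨R, S, hR, hS, hRR, hRS, hRSR⟩ := psd_pinv hy
  have hRu : IsUnit R := by
    rw [← hRR] at hyu
    exact isUnit_of_mul_isUnit_left hyu
  have hRS1 : R * S = 1 := by
    have := hRu.mul_left_inj.mp (show (R * S) * R = 1 * R by rw [hRSR, Matrix.one_mul])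
    exact this
  have hSR1 : S * R = 1 := by rw [← hRS, hRS1]
  set l : ℂ := Complex.I * w with hl
  have hls : star l = -l := by
    rw [hl, star_mul]; simp; ring
  set N := S * a * R - l • (1 : Matrix (Fin n) (Fin n) ℂ) with hN
  have hNp : (-(N + Nᴴ)).PosSemidef := by
    have e : -(N + Nᴴ) = S * (-(a * y + y * aᴴ)) * Sᴴ := by
      rw [hN, conjTranspose_sub, conjTranspose_smul, hls, conjTranspose_one, conjTranspose_mul,
        conjTranspose_mul, hR, hS, ← hRR]
      have e1 : S * (-(a * (R * R) + R * R * aᴴ)) * S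
          = -(S * a * R * (R * S) + (S * R) * (R * (aᴴ * S))) := by
        simp only [Matrix.mul_add, Matrix.add_mul, Matrix.neg_mul, Matrix.mul_neg, Matrix.mul_assoc]
      rw [e1, hRS1, hSR1, Matrix.mul_one, Matrix.one_mul, neg_smul]
      abel
    rw [e]
    exact hL.mul_mul_conjTranspose_same S
  obtain ⟨Z, hZp, hZ⟩ := dissip_limit N hNp
  have hX : Tendsto (fun s : ℂ => (s - l) • (s • (1 : Matrix (Fin n) (Fin n) ℂ) - a)⁻¹) (𝓝[≠] l)
      (𝓝 (R * Z * S)) := by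
    have ht : Tendsto (fun s : ℂ => s - l) (𝓝[≠] l) (𝓝[≠] 0) := by
      refine tendsto_nhdsWithin_iff.mpr ⟨tendsto_sub_zero l, ?_⟩
      filter_upwards [self_mem_nhdsWithin] with s hs
      exact sub_ne_zero.mpr hs
    have hc : Continuous fun M : Matrix (Fin n) (Fin n) ℂ => R * M * S := by fun_prop
    refine ((hc.tendsto Z).comp (hZ.comp ht)).congr fun s => ?_
    have e : s • (1 : Matrix (Fin n) (Fin n) ℂ) - a
        = R * ((s - l) • (1 : Matrix (Fin n) (Fin n) ℂ) - N) * S := by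
      have e1 : (s - l) • (1 : Matrix (Fin n) (Fin n) ℂ) - N = s • 1 - S * a * R := by
        rw [hN, sub_smul]; abel
      have e2 : R * (s • (1 : Matrix (Fin n) (Fin n) ℂ) - S * a * R) * S
          = s • (R * S) - (R * S) * a * (R * S) := by
        simp only [Matrix.mul_sub, Matrix.sub_mul, Matrix.mul_smul, Matrix.smul_mul, Matrix.mul_one,
          Matrix.mul_assoc]
      rw [e1, e2, hRS1, Matrix.one_mul, Matrix.mul_one]
    have hSi : S⁻¹ = R := Matrix.inv_eq_right_inv hSR1
    have hRi : R⁻¹ = S := Matrix.inv_eq_right_inv hRS1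
    rw [e, Matrix.mul_inv_rev, Matrix.mul_inv_rev, hSi, hRi]
    simp only [Function.comp, Matrix.mul_smul, Matrix.smul_mul, Matrix.mul_assoc]
  refine ⟨(w : ℂ) • (c * (R * Z * R) * cᴴ), ?_, ?_⟩
  · have hc : Continuous fun M : Matrix (Fin n) (Fin n) ℂ => c * M * (y * cᴴ) := by fun_prop
    have hlim : Tendsto (fun s : ℂ => (-(Complex.I * s)) • (c * ((s - l) •
          (s • (1 : Matrix (Fin n) (Fin n) ℂ) - a)⁻¹) * (y * cᴴ))
        + (s - l) • (Complex.I • (c * (y * cᴴ) + d))) (𝓝[≠] l)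
        (𝓝 ((-(Complex.I * l)) • (c * (R * Z * S) * (y * cᴴ))
          + (0 : ℂ) • (Complex.I • (c * (y * cᴴ) + d)))) :=
      (((tendsto_id' l).const_mul Complex.I).neg.smul ((hc.tendsto _).comp hX)).add
        ((tendsto_sub_zero l).smul tendsto_const_nhds)
    have h1 : -(Complex.I * l) = w := by rw [hl, ← mul_assoc, Complex.I_mul_I]; ring
    have e3 : c * (R * Z * S) * (y * cᴴ) = c * (R * Z * R) * cᴴ := by
      have : c * (R * Z * S) * (R * R * cᴴ) = c * (R * Z * ((S * R) * R)) * cᴴ := by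
        simp only [Matrix.mul_assoc]
      rw [← hRR, this, hSR1, Matrix.one_mul]
    rw [h1, zero_smul, add_zero, e3] at hlim
    refine hlim.congr' ?_
    filter_upwards [resolvent_eventually a l] with s hs
    have e := X_mul_a a l s hs
    have e4 : (s - l) • Complex.I •
        (c * (s • (1 : Matrix (Fin n) (Fin n) ℂ) - a)⁻¹ * (-(a * y * cᴴ)) + d)
        = Complex.I • (-(c * (((s - l) • (s • (1 : Matrix (Fin n) (Fin n) ℂ) - a)⁻¹) * a) * (y * cᴴ))
          + (s - l) • d) := by
      rw [smul_comm (s - l) Complex.I]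
      congr 1
      simp only [Matrix.smul_mul, Matrix.mul_smul, Matrix.mul_neg, Matrix.mul_assoc, smul_add,
        smul_neg]
    rw [e4, e]
    simp only [Matrix.mul_sub, Matrix.sub_mul, Matrix.mul_smul, Matrix.smul_mul, Matrix.mul_one,
      smul_add, smul_neg, smul_sub, smul_smul, neg_smul, neg_mul, mul_assoc]
    rw [mul_comm (s - l) Complex.I]
    abel
  · have := (hZp.mul_mul_conjTranspose_same R).mul_mul_conjTranspose_same c
    rw [hR] at this
    exact this.smul (by exact_mod_cast hw.le)

lemma det_ne_zero_iff_eigs (A : Matrix (Fin n) (Fin n) ℝ) : A.det ≠ 0 ↔ (0 : ℂ) ∉ eigs A := by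
  rw [notMem_eigs, zero_smul, zero_sub, IsUnit.neg_iff, Matrix.isUnit_iff_isUnit_det]
  have : (A.map Complex.ofReal).det = (A.det : ℂ) :=
    (RingHom.map_det Complex.ofRealHom A).symm
  rw [this, isUnit_iff_ne_zero]
  simp

theorem ni_backward (A : Matrix (Fin n) (Fin n) ℝ) (B : Matrix (Fin n) (Fin m) ℝ)
    (C : Matrix (Fin m) (Fin n) ℝ) (D : Matrix (Fin m) (Fin m) ℝ)
    (hA : A.det ≠ 0) (hD : D = Dᵀ) (Y : Matrix (Fin n) (Fin n) ℝ) (hY : Y.PosDef)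
    (hL : (-(A * Y + Y * Aᵀ)).PosSemidef) (hB : B + A * Y * Cᵀ = 0) : IsNI A B C D := by
  have hy := psd_map Y hY.posSemidef
  have hyu := isUnit_map_ofReal Y hY.isUnit
  have hl := psd_map _ hL
  have e1 : (-(A * Y + Y * Aᵀ)).map Complex.ofReal = -(A.map Complex.ofReal * Y.map Complex.ofReal
      + Y.map Complex.ofReal * (A.map Complex.ofReal)ᴴ) := by
    rw [conjTranspose_map_ofReal, ← map_mul_ofReal, ← map_mul_ofReal]
    ext i j; simp
  rw [e1] at hl
  have hb : B.map Complex.ofReal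
      = -(A.map Complex.ofReal * Y.map Complex.ofReal * (C.map Complex.ofReal)ᴴ) := by
    rw [conjTranspose_map_ofReal, ← map_mul_ofReal, ← map_mul_ofReal, eq_neg_of_add_eq_zero_left hB]
    ext i j; simp
  have hd : (D.map Complex.ofReal)ᴴ = D.map Complex.ofReal := by
    rw [conjTranspose_map_ofReal, ← hD]
  refine ⟨fun μ hμ => ⟨?_, ?_⟩, ?_, ?_⟩
  · rintro rfl
    exact (det_ne_zero_iff_eigs A).mp hA hμ
  · refine backward_i _ _ hy hyu hl μ ?_
    rw [← notMem_eigs]; exact not_not.mpr hμ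
  · intro w hw hs
    have := backward_ii _ _ (C.map Complex.ofReal) _ hy hd hl w hw ((notMem_eigs _ _).mp hs)
    simp only [tf]
    rw [hb]
    exact this
  · intro w hw _
    have := backward_iii _ _ (C.map Complex.ofReal) (D.map Complex.ofReal) hy hyu hl w hw
    simp only [tf]
    rw [hb]
    exact this
end


section
variable {n m : ℕ}

lemma star_mulVec_map {l k : Type*} [Fintype k] (M : Matrix l k ℝ) (x : k → ℂ) :
    star (M.map Complex.ofReal *ᵥ x) = M.map Complex.ofReal *ᵥ star x := by
  funext i
  simp [mulVec, dotProduct]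

lemma ker_range (a : Matrix (Fin n) (Fin n) ℂ) (b : Matrix (Fin n) (Fin m) ℂ) (l : ℂ)
    (Q : Fin n → Matrix (Fin m) (Fin n) ℂ) (hQ : ∑ k : Fin n, a ^ (k : ℕ) * b * Q k = 1)
    (Z : Matrix (Fin n) (Fin n) ℂ) (hZa : Z * a = l • Z) (z : Fin n → ℂ) (hz : Z *ᵥ z = z) :
    ∃ w, z = Z *ᵥ (b *ᵥ w) := by
  have hp : ∀ k : ℕ, Z * a ^ k = l ^ k • Z := by
    intro k
    induction k with
    | zero => simp
    | succ k ih => rw [pow_succ, ← Matrix.mul_assoc, ih, Matrix.smul_mul, hZa, smul_smul, pow_succ]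
  refine ⟨∑ k : Fin n, l ^ (k : ℕ) • (Q k *ᵥ z), ?_⟩
  have h1 : z = Z *ᵥ ((∑ k : Fin n, a ^ (k : ℕ) * b * Q k) *ᵥ z) := by
    rw [hQ, one_mulVec, hz]
  nth_rewrite 1 [h1]
  rw [mulVec_mulVec, Matrix.mul_sum, Matrix.sum_mulVec, Matrix.mulVec_sum, Matrix.mulVec_sum]
  refine Finset.sum_congr rfl fun k _ => ?_
  have : Z * (a ^ (k : ℕ) * b * Q k) = l ^ (k : ℕ) • (Z * (b * Q k)) := by
    rw [Matrix.mul_assoc, ← Matrix.mul_assoc Z, hp, Matrix.smul_mul]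
  rw [this, smul_mulVec, mulVec_smul, mulVec_smul]
  simp only [mulVec_mulVec]

lemma tendsto_I_right (w : ℝ) :
    Tendsto (fun t : ℝ => Complex.I * (t : ℂ)) (𝓝[>] w) (𝓝[≠] (Complex.I * w)) := by
  refine tendsto_nhdsWithin_iff.mpr ⟨?_, ?_⟩
  · have : Continuous fun t : ℝ => Complex.I * (t : ℂ) := by fun_prop
    exact (this.tendsto w).mono_left nhdsWithin_le_nhds
  · filter_upwards [self_mem_nhdsWithin] with t ht
    intro h
    have ht : w < t := ht
    have h2 : (t : ℂ) = w := mul_left_cancel₀ Complex.I_ne_zero h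
    have : t = w := by exact_mod_cast h2
    linarith

lemma re_form_nonneg (G : Matrix (Fin m) (Fin m) ℂ) (h : (G + Gᴴ).PosSemidef) (u : Fin m → ℂ) :
    0 ≤ (star u ⬝ᵥ (G *ᵥ u)).re := by
  have h0 := (Complex.le_def.mp (h.dotProduct_mulVec_nonneg u)).1
  have e : star u ⬝ᵥ (Gᴴ *ᵥ u) = star (star u ⬝ᵥ (G *ᵥ u)) := by
    rw [← star_dotProduct, star_mulVec, ← dotProduct_mulVec]
  rw [add_mulVec, dotProduct_add, e] at h0
  simp at h0
  linarith

lemma fdi_nonneg (a : Matrix (Fin n) (Fin n) ℂ) (b : Matrix (Fin n) (Fin m) ℂ)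
    (c : Matrix (Fin m) (Fin n) ℂ) (Q : Fin n → Matrix (Fin m) (Fin n) ℂ)
    (O : Fin n → Matrix (Fin n) (Fin m) ℂ)
    (hQ : ∑ k : Fin n, a ^ (k : ℕ) * b * Q k = 1)
    (hO : ∑ k : Fin n, O k * (c * a ^ (k : ℕ)) = 1)
    (ha : IsUnit a)
    (H1 : ∀ w : ℝ, 0 < w → IsUnit ((Complex.I * w) • (1 : Matrix (Fin n) (Fin n) ℂ) - a) →
      (c * ((Complex.I * w) • (1 : Matrix (Fin n) (Fin n) ℂ) - a)⁻¹ * b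
       + (c * ((Complex.I * w) • (1 : Matrix (Fin n) (Fin n) ℂ) - a)⁻¹ * b)ᴴ).PosSemidef)
    (H2 : ∀ w : ℝ, 0 < w → ¬ IsUnit ((Complex.I * w) • (1 : Matrix (Fin n) (Fin n) ℂ) - a) →
      ∃ K : Matrix (Fin m) (Fin m) ℂ, Tendsto (fun s : ℂ => c * ((s - Complex.I * w) •
        (s • (1 : Matrix (Fin n) (Fin n) ℂ) - a)⁻¹) * b) (𝓝[≠] (Complex.I * w)) (𝓝 K)
        ∧ K.PosSemidef)
    (x : Fin n → ℂ) (u : Fin m → ℂ) (w : ℝ) (hw : 0 ≤ w)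
    (hx : a *ᵥ x + b *ᵥ u = (Complex.I * w) • x) : 0 ≤ (star u ⬝ᵥ (c *ᵥ x)).re := by
  -- values at regular points
  have hreg : ∀ t : ℝ, 0 < t → IsUnit ((Complex.I * t) • (1 : Matrix (Fin n) (Fin n) ℂ) - a) →
      0 ≤ (star u ⬝ᵥ (c *ᵥ (((Complex.I * t) • (1 : Matrix (Fin n) (Fin n) ℂ) - a)⁻¹ *ᵥ (b *ᵥ u)))).re := by
    intro t ht hu
    have := re_form_nonneg _ (H1 t ht hu) u
    simpa only [mulVec_mulVec, Matrix.mul_assoc] using this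
  have hbu : b *ᵥ u = ((Complex.I * w) • (1 : Matrix (Fin n) (Fin n) ℂ) - a) *ᵥ x := by
    rw [sub_mulVec, smul_mulVec, one_mulVec, ← hx]; abel
  have hcu : Continuous fun y : Fin n → ℂ => (star u ⬝ᵥ (c *ᵥ y)).re := by fun_prop
  have hlimz : ∀ y, Tendsto (fun t : ℝ => ((Complex.I * t) • (1 : Matrix (Fin n) (Fin n) ℂ) - a)⁻¹ *ᵥ
      (b *ᵥ u)) (𝓝[>] w) (𝓝 y) → 0 ≤ (star u ⬝ᵥ (c *ᵥ y)).re := by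
    intro y hy
    refine ge_of_tendsto ((hcu.tendsto y).comp hy) ?_
    filter_upwards [(tendsto_I_right w).eventually (resolvent_eventually a (Complex.I * w)),
      self_mem_nhdsWithin] with t ht htw
    exact hreg t (lt_of_le_of_lt hw htw) ht
  by_cases hu : IsUnit ((Complex.I * w) • (1 : Matrix (Fin n) (Fin n) ℂ) - a)
  · apply hlimz
    have hc : Continuous fun t : ℝ => (Complex.I * t) • (1 : Matrix (Fin n) (Fin n) ℂ) - a := by
      fun_prop
    have h1 := tendsto_matrix_inv ((hc.tendsto w).mono_left (nhdsWithin_le_nhds (s := Set.Ioi w))) hu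
    have hc2 : Continuous fun M : Matrix (Fin n) (Fin n) ℂ => M *ᵥ (b *ᵥ u) := by fun_prop
    have h2 := (hc2.tendsto _).comp h1
    have hi := Matrix.nonsing_inv_mul _ ((Matrix.isUnit_iff_isUnit_det _).mp hu)
    have e : ((Complex.I * w) • (1 : Matrix (Fin n) (Fin n) ℂ) - a)⁻¹ *ᵥ (b *ᵥ u) = x := by
      rw [hbu, mulVec_mulVec, hi, one_mulVec]
    simp only [e] at h2
    exact h2
  · have hw0 : 0 < w := by
      refine lt_of_le_of_ne hw fun h => hu ?_
      rw [← h]; simpa using ha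
    obtain ⟨K, hK, hKp⟩ := H2 w hw0 hu
    obtain ⟨Z, hZ⟩ := pole_limit a b c _ Q O hQ hO K hK
    obtain ⟨haZ, hZa, hker, -⟩ := pole_props a _ Z hZ
    have hKZ : K = c * Z * b := by
      have hc : Continuous fun M : Matrix (Fin n) (Fin n) ℂ => c * M * b := by fun_prop
      exact tendsto_nhds_unique hK ((hc.tendsto Z).comp hZ)
    have hKu : K *ᵥ u = 0 := by
      have : Z *ᵥ (b *ᵥ u) = 0 := by
        rw [hbu, mulVec_mulVec, Matrix.mul_sub, hZa, Matrix.mul_smul, Matrix.mul_one, sub_self,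
          zero_mulVec]
      rw [hKZ, ← mulVec_mulVec, ← mulVec_mulVec, this, mulVec_zero]
    have hZx : star u ⬝ᵥ (c *ᵥ (Z *ᵥ x)) = 0 := by
      obtain ⟨v, hv⟩ := ker_range a b _ Q hQ Z hZa (Z *ᵥ x)
        (hker _ (by rw [mulVec_mulVec, haZ, smul_mulVec]))
      have : c *ᵥ (Z *ᵥ x) = K *ᵥ v := by
        rw [hv, hKZ, ← mulVec_mulVec, ← mulVec_mulVec]
      rw [this, dotProduct_mulVec]
      have h2 : star u ᵥ* K = 0 := by
        have := star_mulVec K u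
        rw [hKu, hKp.isHermitian.eq, star_zero] at this
        exact this.symm
      rw [h2, zero_dotProduct]
    have hfin := hlimz (x - Z *ᵥ x) ?_
    · rw [mulVec_sub, dotProduct_sub, hZx, sub_zero] at hfin
      exact hfin
    · have hc : Continuous fun M : Matrix (Fin n) (Fin n) ℂ => x - M *ᵥ x := by fun_prop
      refine (((hc.tendsto Z).comp hZ).comp (tendsto_I_right w)).congr' ?_
      filter_upwards [(tendsto_I_right w).eventually (resolvent_eventually a (Complex.I * w))] with t ht
      have hi := Matrix.nonsing_inv_mul _ ((Matrix.isUnit_iff_isUnit_det _).mp ht)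
      set s := Complex.I * (t : ℂ)
      have e : (Complex.I * w) • (1 : Matrix (Fin n) (Fin n) ℂ) - a
          = (s • (1 : Matrix (Fin n) (Fin n) ℂ) - a) - (s - Complex.I * w) • 1 := by
        rw [sub_smul]; abel
      rw [hbu, e, mulVec_mulVec, Matrix.mul_sub, hi, Matrix.mul_smul, Matrix.mul_one, sub_mulVec,
        one_mulVec]
      rfl

lemma pole_pos (a : Matrix (Fin n) (Fin n) ℂ) (b : Matrix (Fin n) (Fin m) ℂ)
    (c : Matrix (Fin m) (Fin n) ℂ) (Q : Fin n → Matrix (Fin m) (Fin n) ℂ)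
    (O : Fin n → Matrix (Fin n) (Fin m) ℂ)
    (hQ : ∑ k : Fin n, a ^ (k : ℕ) * b * Q k = 1)
    (hO : ∑ k : Fin n, O k * (c * a ^ (k : ℕ)) = 1)
    (w : ℝ) (K : Matrix (Fin m) (Fin m) ℂ)
    (hK : Tendsto (fun s : ℂ => c * ((s - Complex.I * w) •
        (s • (1 : Matrix (Fin n) (Fin n) ℂ) - a)⁻¹) * b) (𝓝[≠] (Complex.I * w)) (𝓝 K))
    (hKp : K.PosSemidef)
    (P : Matrix (Fin n) (Fin n) ℂ) (hPh : Pᴴ = P) (hN : (-(P * a + aᴴ * P)).PosSemidef)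
    (hPb : P * b = cᴴ) (x : Fin n → ℂ) (hx0 : x ≠ 0) (hx : a *ᵥ x = (Complex.I * w) • x) :
    0 < (star x ⬝ᵥ (P *ᵥ x)).re := by
  set l : ℂ := Complex.I * w with hl
  have hls : star l = -l := by
    rw [hl, star_mul]; simp; ring
  obtain ⟨Z, hZ⟩ := pole_limit a b c _ Q O hQ hO K hK
  obtain ⟨haZ, hZa, hker, hkerl⟩ := pole_props a _ Z hZ
  have hKZ : K = c * Z * b := by
    have hc : Continuous fun M : Matrix (Fin n) (Fin n) ℂ => c * M * b := by fun_prop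
    exact tendsto_nhds_unique hK ((hc.tendsto Z).comp hZ)
  have hNx : (-(P * a + aᴴ * P)) *ᵥ x = 0 := by
    rw [← hN.dotProduct_mulVec_zero_iff x]
    rw [neg_mulVec, add_mulVec, dotProduct_neg, dotProduct_add, ← mulVec_mulVec, ← mulVec_mulVec,
      dotProduct_mulVec (star x) aᴴ, ← star_mulVec, hx, mulVec_smul, dotProduct_smul, star_smul,
      smul_dotProduct, hls]
    simp
  have hleft : aᴴ *ᵥ (P *ᵥ x) = (-l) • (P *ᵥ x) := by
    rw [neg_mulVec, add_mulVec, ← mulVec_mulVec, ← mulVec_mulVec, hx, mulVec_smul,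
      neg_eq_zero] at hNx
    rw [neg_smul]
    exact eq_neg_of_add_eq_zero_right hNx
  have hleft2 : star (P *ᵥ x) ᵥ* a = l • star (P *ᵥ x) := by
    have : star (aᴴ *ᵥ (P *ᵥ x)) = star (P *ᵥ x) ᵥ* a := by
      rw [star_mulVec, conjTranspose_conjTranspose]
    rw [← this, hleft, star_smul, star_neg, hls, neg_neg]
  have hpZ := hkerl _ hleft2
  obtain ⟨v, hv⟩ := ker_range a b _ Q hQ Z hZa x (hker _ hx)
  have hcx : c *ᵥ x = K *ᵥ v := by
    rw [hv, hKZ, ← mulVec_mulVec, ← mulVec_mulVec]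
  have e1 : star x ⬝ᵥ (P *ᵥ x) = star v ⬝ᵥ (K *ᵥ v) := by
    have s1 : star x ⬝ᵥ (P *ᵥ x) = star (P *ᵥ x) ⬝ᵥ x := by
      rw [star_mulVec, hPh, dotProduct_mulVec]
    have s2 : star (P *ᵥ x) ᵥ* b = star (c *ᵥ x) := by
      rw [star_mulVec, star_mulVec, hPh, vecMul_vecMul, hPb]
    rw [s1]
    nth_rewrite 2 [hv]
    rw [dotProduct_mulVec, hpZ, dotProduct_mulVec, s2, hcx, star_mulVec, hKp.isHermitian.eq,
      dotProduct_mulVec]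
  rw [e1]
  have h0 := hKp.dotProduct_mulVec_nonneg v
  have hne : star v ⬝ᵥ (K *ᵥ v) ≠ 0 := by
    intro h
    have hKv := (hKp.dotProduct_mulVec_zero_iff v).mp h
    rw [hKv] at hcx
    apply hx0
    have hp : ∀ k : ℕ, a ^ k *ᵥ x = l ^ k • x := by
      intro k
      induction k with
      | zero => simp
      | succ k ih => rw [pow_succ, ← mulVec_mulVec, hx, mulVec_smul, ih, smul_smul, pow_succ, mul_comm]
    have : x = (∑ k : Fin n, O k * (c * a ^ (k : ℕ))) *ᵥ x := by rw [hO, one_mulVec]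
    rw [this, Matrix.sum_mulVec]
    refine Finset.sum_eq_zero fun k _ => ?_
    rw [← mulVec_mulVec, ← mulVec_mulVec, hp, mulVec_smul, hcx, smul_zero, mulVec_zero]
  have := (Complex.lt_def.mp (lt_of_le_of_ne h0 (Ne.symm hne))).1
  simpa using this

lemma P_inj (a : Matrix (Fin n) (Fin n) ℂ) (b : Matrix (Fin n) (Fin m) ℂ)
    (c : Matrix (Fin m) (Fin n) ℂ) (O : Fin n → Matrix (Fin n) (Fin m) ℂ)
    (hO : ∑ k : Fin n, O k * (c * a ^ (k : ℕ)) = 1)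
    (P : Matrix (Fin n) (Fin n) ℂ) (hPh : Pᴴ = P) (hN : (-(P * a + aᴴ * P)).PosSemidef)
    (hPb : P * b = cᴴ) (x : Fin n → ℂ) (hx : P *ᵥ x = 0) : x = 0 := by
  have step : ∀ y, P *ᵥ y = 0 → P *ᵥ (a *ᵥ y) = 0 := by
    intro y hy
    have hyP : star y ᵥ* P = 0 := by
      have := star_mulVec P y
      rw [hy, hPh, star_zero] at this
      exact this.symm
    have h1 : (-(P * a + aᴴ * P)) *ᵥ y = 0 := by
      rw [← hN.dotProduct_mulVec_zero_iff y]
      rw [neg_mulVec, add_mulVec, dotProduct_neg, dotProduct_add, ← mulVec_mulVec, ← mulVec_mulVec,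
        hy, dotProduct_mulVec, hyP]
      simp
    rw [neg_mulVec, add_mulVec, ← mulVec_mulVec, ← mulVec_mulVec, hy, mulVec_zero, add_zero,
      neg_eq_zero] at h1
    exact h1
  have hk : ∀ k : ℕ, P *ᵥ (a ^ k *ᵥ x) = 0 := by
    intro k
    induction k with
    | zero => simpa using hx
    | succ k ih =>
      have := step _ ih
      rw [pow_succ', ← mulVec_mulVec]; exact this
  have hc : c = bᴴ * P := by
    have := congrArg conjTranspose hPb
    rw [conjTranspose_mul, conjTranspose_conjTranspose, hPh] at this
    exact this.symm
  have : x = (∑ k : Fin n, O k * (c * a ^ (k : ℕ))) *ᵥ x := by rw [hO, one_mulVec]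
  rw [this, Matrix.sum_mulVec]
  refine Finset.sum_eq_zero fun k _ => ?_
  rw [← mulVec_mulVec, ← mulVec_mulVec, hc, ← mulVec_mulVec, hk, mulVec_zero, mulVec_zero]

end


section
variable {n m : ℕ}

lemma real_part_P (A : Matrix (Fin n) (Fin n) ℝ) (B : Matrix (Fin n) (Fin m) ℝ)
    (C : Matrix (Fin m) (Fin n) ℝ) (P : Matrix (Fin n) (Fin n) ℂ) (hPh : Pᴴ = P)
    (hN : (-(P * A.map Complex.ofReal + (A.map Complex.ofReal)ᴴ * P)).PosSemidef)
    (hPb : P * B.map Complex.ofReal = (C.map Complex.ofReal)ᴴ) :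
    ∃ S : Matrix (Fin n) (Fin n) ℝ, Sᵀ = S ∧ (-(S * A + Aᵀ * S)).PosSemidef ∧ S * B = Cᵀ := by
  have hsym : (P.map Complex.re)ᵀ = P.map Complex.re := by
    ext i j
    have := congrFun (congrFun hPh i) j
    have h2 := congrArg Complex.re this
    simpa using h2
  have hre : ∀ {k : ℕ} (M : Matrix (Fin n) (Fin k) ℝ),
      P.map Complex.re * M = (P * M.map Complex.ofReal).map Complex.re := by
    intro k M
    ext i j
    simp [Matrix.mul_apply]
  refine ⟨P.map Complex.re, hsym, ?_, ?_⟩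
  · have e : -(P.map Complex.re * A + Aᵀ * P.map Complex.re)
        = (-(P * A.map Complex.ofReal + (A.map Complex.ofReal)ᴴ * P)).map Complex.re := by
      ext i j
      simp [Matrix.mul_apply]
    apply PosSemidef.of_dotProduct_mulVec_nonneg
    · rw [IsHermitian, conjTranspose_eq_transpose_of_trivial, transpose_neg, transpose_add,
        transpose_mul, transpose_mul, transpose_transpose, hsym, add_comm]
    · intro x
      rw [e]
      have h0 := (Complex.le_def.mp (hN.dotProduct_mulVec_nonneg (fun i => (x i : ℂ)))).1
      generalize (-(P * A.map Complex.ofReal + (A.map Complex.ofReal)ᴴ * P)) = M at h0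
      have : (star (fun i => (x i : ℂ)) ⬝ᵥ (M *ᵥ (fun i => (x i : ℂ)))).re
          = star x ⬝ᵥ (M.map Complex.re *ᵥ x) := by
        simp [dotProduct, mulVec]
      rw [this] at h0
      simpa using h0
  · rw [hre, hPb]
    ext i j; simp

lemma herm_of_real_psd (M : Matrix (Fin m) (Fin m) ℝ)
    (h : (Complex.I • (M.map Complex.ofReal - (M.map Complex.ofReal)ᴴ)).PosSemidef) : M = Mᵀ := by
  have ht : (Complex.I • (M.map Complex.ofReal - (M.map Complex.ofReal)ᴴ)).trace = 0 := by
    simp [Matrix.trace]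
  have h0 := h.trace_eq_zero_iff.mp ht
  ext i j
  have := congrFun (congrFun h0 i) j
  simp [sub_eq_zero] at this
  simpa using this

lemma tf_decomp (a : Matrix (Fin n) (Fin n) ℂ) (b : Matrix (Fin n) (Fin m) ℂ)
    (c : Matrix (Fin m) (Fin n) ℂ) (d : Matrix (Fin m) (Fin m) ℂ) (s : ℂ)
    (hs : IsUnit (s • (1 : Matrix (Fin n) (Fin n) ℂ) - a)) :
    c * (s • (1 : Matrix (Fin n) (Fin n) ℂ) - a)⁻¹ * (-(a * b)) + d
      = -(s • (c * (s • (1 : Matrix (Fin n) (Fin n) ℂ) - a)⁻¹ * b)) + (c * b + d) := by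
  have hi := Matrix.nonsing_inv_mul _ ((Matrix.isUnit_iff_isUnit_det _).mp hs)
  set E := s • (1 : Matrix (Fin n) (Fin n) ℂ) - a with hE
  have hFa : E⁻¹ * a = s • E⁻¹ - 1 := by
    have : a = s • (1 : Matrix (Fin n) (Fin n) ℂ) - E := by rw [hE]; abel
    clear_value E
    rw [this, Matrix.mul_sub, hi, Matrix.mul_smul, Matrix.mul_one]
  have : c * E⁻¹ * (-(a * b)) + d = -(c * (E⁻¹ * a) * b) + d := by
    simp only [Matrix.mul_neg, Matrix.mul_assoc]
  rw [this, hFa]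
  simp only [Matrix.mul_sub, Matrix.sub_mul, Matrix.mul_smul, Matrix.smul_mul, Matrix.mul_one]
  abel

lemma psd_of_tendsto {α : Type*} {f : Filter α} [f.NeBot] {T : α → Matrix (Fin m) (Fin m) ℂ}
    {M : Matrix (Fin m) (Fin m) ℂ} (h : Tendsto T f (𝓝 M))
    (hp : ∀ᶠ t in f, (Complex.I • (T t - (T t)ᴴ)).PosSemidef) :
    (Complex.I • (M - Mᴴ)).PosSemidef := by
  have hc : Continuous fun M : Matrix (Fin m) (Fin m) ℂ => Complex.I • (M - Mᴴ) := by fun_prop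
  exact (psd_isClosed (k := Fin m)).mem_of_tendsto ((hc.tendsto M).comp h) hp

lemma ni_D (A : Matrix (Fin n) (Fin n) ℝ) (B : Matrix (Fin n) (Fin m) ℝ)
    (C : Matrix (Fin m) (Fin n) ℝ) (D : Matrix (Fin m) (Fin m) ℝ) (h : IsNI A B C D) :
    D = Dᵀ := by
  apply herm_of_real_psd
  set a := A.map Complex.ofReal
  have hid : Tendsto (fun t : ℝ => (Complex.I * (t : ℂ))⁻¹) atTop (𝓝 0) := by
    have h1 : Tendsto (fun t : ℝ => ((t⁻¹ : ℝ) : ℂ)) atTop (𝓝 ((0 : ℝ) : ℂ)) :=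
      (Complex.continuous_ofReal.tendsto 0).comp tendsto_inv_atTop_zero
    have h2 := h1.const_mul (Complex.I⁻¹)
    simp only [Complex.ofReal_zero, mul_zero] at h2
    refine h2.congr fun t => ?_
    rw [mul_inv, Complex.ofReal_inv]
  have hM : Tendsto (fun t : ℝ => (1 : Matrix (Fin n) (Fin n) ℂ) - (Complex.I * (t : ℂ))⁻¹ • a) atTop
      (𝓝 1) := by
    have := (tendsto_const_nhds (x := (1 : Matrix (Fin n) (Fin n) ℂ))).sub
      (hid.smul (tendsto_const_nhds (x := a)))
    simpa using this
  have hMi := tendsto_matrix_inv hM isUnit_one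
  have hlim : Tendsto (fun t : ℝ => tf A B C D (Complex.I * t)) atTop (𝓝 (D.map Complex.ofReal)) := by
    have hc : Continuous fun M : Matrix (Fin n) (Fin n) ℂ =>
      C.map Complex.ofReal * M * B.map Complex.ofReal + D.map Complex.ofReal := by fun_prop
    have h2 := (hc.tendsto _).comp (hid.smul hMi)
    simp only [zero_smul, Matrix.mul_zero, Matrix.zero_mul, zero_add] at h2
    refine h2.congr' ?_
    filter_upwards [eventually_isUnit hM isUnit_one, eventually_gt_atTop 0] with t ht ht0
    have hne : Complex.I * (t : ℂ) ≠ 0 := mul_ne_zero Complex.I_ne_zero (by exact_mod_cast ht0.ne')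
    have hi := Matrix.mul_nonsing_inv _ ((Matrix.isUnit_iff_isUnit_det _).mp ht)
    have e : (Complex.I * (t : ℂ)) • (1 : Matrix (Fin n) (Fin n) ℂ) - a
        = (Complex.I * (t : ℂ)) • ((1 : Matrix (Fin n) (Fin n) ℂ) - (Complex.I * (t : ℂ))⁻¹ • a) := by
      rw [smul_sub, smul_smul, mul_inv_cancel₀ hne, one_smul]
    have e2 : ((Complex.I * (t : ℂ)) • (1 : Matrix (Fin n) (Fin n) ℂ) - a)⁻¹
        = (Complex.I * (t : ℂ))⁻¹ • ((1 : Matrix (Fin n) (Fin n) ℂ) - (Complex.I * (t : ℂ))⁻¹ • a)⁻¹ := by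
      apply Matrix.inv_eq_right_inv
      rw [e, Matrix.smul_mul, Matrix.mul_smul, hi, smul_smul, mul_inv_cancel₀ hne, one_smul]
    simp only [tf]
    rw [show A.map Complex.ofReal = a from rfl, e2]
    rfl
  refine psd_of_tendsto hlim ?_
  filter_upwards [eventually_isUnit hM isUnit_one, eventually_gt_atTop 0] with t ht ht0
  refine h.2.1 t ht0 ?_
  rw [notMem_eigs]
  have hne : Complex.I * (t : ℂ) ≠ 0 := mul_ne_zero Complex.I_ne_zero (by exact_mod_cast ht0.ne')
  have e : (Complex.I * (t : ℂ)) • (1 : Matrix (Fin n) (Fin n) ℂ) - a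
      = ((Complex.I * (t : ℂ)) • (1 : Matrix (Fin n) (Fin n) ℂ))
        * ((1 : Matrix (Fin n) (Fin n) ℂ) - (Complex.I * (t : ℂ))⁻¹ • a) := by
    rw [Matrix.smul_mul, Matrix.one_mul, smul_sub, smul_smul, mul_inv_cancel₀ hne, one_smul]
  show IsUnit ((Complex.I * (t : ℂ)) • (1 : Matrix (Fin n) (Fin n) ℂ) - a)
  rw [e]
  exact (isUnit_one.smul (Units.mk0 _ hne)).mul ht

theorem ni_forward (A : Matrix (Fin n) (Fin n) ℝ) (B : Matrix (Fin n) (Fin m) ℝ)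
    (C : Matrix (Fin m) (Fin n) ℝ) (D : Matrix (Fin m) (Fin m) ℝ) (hmin : IsMinimal A B C)
    (h : IsNI A B C D) :
    (A.det ≠ 0 ∧ D = Dᵀ) ∧ ∃ Y : Matrix (Fin n) (Fin n) ℝ, Y.PosDef ∧
          (-(A * Y + Y * Aᵀ)).PosSemidef ∧ B + A * Y * Cᵀ = 0 := by
  have hdet : A.det ≠ 0 := by
    rw [det_ne_zero_iff_eigs]
    exact fun h0 => (h.1 0 h0).1 rfl
  refine ⟨⟨hdet, ni_D A B C D h⟩, ?_⟩
  have hAu : IsUnit A := (Matrix.isUnit_iff_isUnit_det _).mpr (isUnit_iff_ne_zero.mpr hdet)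
  have hAi : A * A⁻¹ = 1 := Matrix.mul_nonsing_inv _ ((Matrix.isUnit_iff_isUnit_det _).mp hAu)
  have hiA : A⁻¹ * A = 1 := Matrix.nonsing_inv_mul _ ((Matrix.isUnit_iff_isUnit_det _).mp hAu)
  obtain ⟨Bh, hBh⟩ : ∃ Bh, Bh = -(A⁻¹ * B) := ⟨_, rfl⟩
  have hB : B = -(A * Bh) := by
    rw [hBh, Matrix.mul_neg, neg_neg, ← Matrix.mul_assoc, hAi, Matrix.one_mul]
  obtain ⟨a, ha⟩ : ∃ a, a = A.map Complex.ofReal := ⟨_, rfl⟩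
  obtain ⟨b, hb⟩ : ∃ b, b = Bh.map Complex.ofReal := ⟨_, rfl⟩
  obtain ⟨c, hc⟩ : ∃ c, c = C.map Complex.ofReal := ⟨_, rfl⟩
  obtain ⟨d, hd⟩ : ∃ d, d = D.map Complex.ofReal := ⟨_, rfl⟩
  have hau : IsUnit a := ha ▸ isUnit_map_ofReal A hAu
  have hBc : B.map Complex.ofReal = -(a * b) := by
    rw [hB, ha, hb, ← map_mul_ofReal]; ext i j; simp
  obtain ⟨Q0, hQ0⟩ := ctrl_right_inv A B C hmin
  obtain ⟨O, hO⟩ := obs_left_inv A B C hmin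
  rw [← ha, ← hc] at hO
  have hQ : ∑ k : Fin n, a ^ (k : ℕ) * b * (-(Q0 k * a)) = 1 := by
    rw [← ha, hBc] at hQ0
    have e : a * (∑ k : Fin n, a ^ (k : ℕ) * b * (-(Q0 k * a))) = a := by
      calc _ = (∑ k : Fin n, a ^ (k : ℕ) * (-(a * b)) * Q0 k) * a := by
            rw [Matrix.mul_sum, Matrix.sum_mul]
            refine Finset.sum_congr rfl fun k _ => ?_
            have : a * a ^ (k : ℕ) = a ^ (k : ℕ) * a := (pow_succ' a k).symm.trans (pow_succ a k)
            simp only [Matrix.mul_neg, Matrix.neg_mul, neg_inj]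
            simp only [← Matrix.mul_assoc, this]
        _ = a := by rw [hQ0, Matrix.one_mul]
    exact hau.mul_left_cancel (by rw [e, Matrix.mul_one])
  have htf : ∀ s, IsUnit (s • (1 : Matrix (Fin n) (Fin n) ℂ) - a) → tf A B C D s
      = -(s • (c * (s • (1 : Matrix (Fin n) (Fin n) ℂ) - a)⁻¹ * b)) + (c * b + d) := by
    intro s hs
    rw [← tf_decomp a b c d s hs, tf, hBc, ← ha, ← hc, ← hd]
  have hconv : ∀ t : ℝ, IsUnit ((Complex.I * t) • (1 : Matrix (Fin n) (Fin n) ℂ) - a) →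
      (Complex.I * t) ∉ eigs A := fun t ht => (notMem_eigs _ _).mpr (ha ▸ ht)
  have hconv2 : ∀ t : ℝ, ¬ IsUnit ((Complex.I * t) • (1 : Matrix (Fin n) (Fin n) ℂ) - a) →
      (Complex.I * t) ∈ eigs A := by
    intro t ht
    by_contra hh
    exact ht (ha ▸ (notMem_eigs _ _).mp hh)
  -- symmetry of the DC gain
  have hr0 : (c * b + d)ᴴ = c * b + d := by
    have er : c * b + d = (C * Bh + D).map Complex.ofReal := by
      rw [hc, hb, hd, ← map_mul_ofReal]; ext i j; simp
    have hs : C * Bh + D = (C * Bh + D)ᵀ := by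
      apply herm_of_real_psd
      rw [← er]
      have hmc : Continuous fun t : ℝ => (Complex.I * t) • (1 : Matrix (Fin n) (Fin n) ℂ) - a := by
        fun_prop
      have hm0 := (hmc.tendsto 0).mono_left (nhdsWithin_le_nhds (s := Set.Ioi (0:ℝ)))
      have hu0 : IsUnit ((Complex.I * ((0:ℝ):ℂ)) • (1 : Matrix (Fin n) (Fin n) ℂ) - a) := by
        simpa using hau
      have hinv := tendsto_matrix_inv hm0 hu0
      have hev := eventually_isUnit hm0 hu0
      have hs0 : Tendsto (fun t : ℝ => Complex.I * (t : ℂ)) (𝓝[>] 0) (𝓝 (Complex.I * ((0:ℝ) : ℂ))) :=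
        (tendsto_I_right 0).mono_right nhdsWithin_le_nhds
      have hcc : Continuous fun M : Matrix (Fin n) (Fin n) ℂ => c * M * b := by fun_prop
      have hlim := ((hs0.smul ((hcc.tendsto _).comp hinv)).neg).add (tendsto_const_nhds (x := c * b + d))
      rw [Complex.ofReal_zero, mul_zero, zero_smul, neg_zero, zero_add] at hlim
      refine psd_of_tendsto hlim ?_
      filter_upwards [hev, self_mem_nhdsWithin] with t ht ht0
      have := h.2.1 t ht0 (hconv t ht)
      rw [htf _ ht] at this
      exact this
    rw [er, conjTranspose_map_ofReal, ← hs]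
  have H1 : ∀ w : ℝ, 0 < w → IsUnit ((Complex.I * w) • (1 : Matrix (Fin n) (Fin n) ℂ) - a) →
      (c * ((Complex.I * w) • (1 : Matrix (Fin n) (Fin n) ℂ) - a)⁻¹ * b
       + (c * ((Complex.I * w) • (1 : Matrix (Fin n) (Fin n) ℂ) - a)⁻¹ * b)ᴴ).PosSemidef := by
    intro w hw hu
    have h1 := h.2.1 w hw (hconv w hu)
    rw [htf _ hu] at h1
    generalize c * ((Complex.I * w) • (1 : Matrix (Fin n) (Fin n) ℂ) - a)⁻¹ * b = G at h1
    have e : Complex.I • ((-((Complex.I * (w : ℂ)) • G) + (c * b + d))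
        - (-((Complex.I * (w : ℂ)) • G) + (c * b + d))ᴴ) = (w : ℂ) • (G + Gᴴ) := by
      rw [conjTranspose_add, conjTranspose_neg, conjTranspose_smul, hr0]
      have hss : star (Complex.I * (w : ℂ)) = -(Complex.I * w) := by
        rw [star_mul]; simp; ring
      have e2 : Complex.I * (Complex.I * w) = -(w : ℂ) := by
        rw [← mul_assoc, Complex.I_mul_I]; ring
      rw [hss, add_sub_add_right_eq_sub, smul_sub, smul_neg, smul_neg, smul_smul, smul_smul,
        mul_neg, e2, smul_add]
      simp
    rw [e] at h1
    have h2 := h1.smul (a := ((w⁻¹ : ℝ) : ℂ)) (by exact_mod_cast (inv_pos.mpr hw).le)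
    rwa [smul_smul, ← Complex.ofReal_mul, inv_mul_cancel₀ hw.ne', Complex.ofReal_one, one_smul] at h2
  have H2 : ∀ w : ℝ, 0 < w → ¬ IsUnit ((Complex.I * w) • (1 : Matrix (Fin n) (Fin n) ℂ) - a) →
      ∃ K : Matrix (Fin m) (Fin m) ℂ, Tendsto (fun s : ℂ => c * ((s - Complex.I * w) •
        (s • (1 : Matrix (Fin n) (Fin n) ℂ) - a)⁻¹) * b) (𝓝[≠] (Complex.I * w)) (𝓝 K)
        ∧ K.PosSemidef := by
    intro w hw hu
    obtain ⟨K, hK, hKp⟩ := h.2.2 w hw (hconv2 w hu)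
    have hlne : Complex.I * (w : ℂ) ≠ 0 := mul_ne_zero Complex.I_ne_zero (by exact_mod_cast hw.ne')
    refine ⟨((w⁻¹ : ℝ) : ℂ) • K, ?_, hKp.smul (by exact_mod_cast (inv_pos.mpr hw).le)⟩
    have hlim := (((tendsto_id' (Complex.I * w)).inv₀ hlne).const_mul Complex.I).smul
      (hK.sub ((tendsto_sub_zero (Complex.I * w)).smul
        (tendsto_const_nhds (x := Complex.I • (c * b + d)))))
    have e : Complex.I * (Complex.I * (w : ℂ))⁻¹ = ((w⁻¹ : ℝ) : ℂ) := by
      rw [mul_inv, ← mul_assoc, mul_inv_cancel₀ Complex.I_ne_zero, one_mul, Complex.ofReal_inv]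
    rw [e, zero_smul, sub_zero] at hlim
    refine hlim.congr' ?_
    have hne : ∀ᶠ s : ℂ in 𝓝[≠] (Complex.I * w), s ≠ 0 :=
      (tendsto_id' (Complex.I * w)).eventually_ne hlne
    filter_upwards [resolvent_eventually a (Complex.I * w), hne] with s hs hs0
    rw [htf s hs]
    have e3 : c * ((s - Complex.I * w) • (s • (1 : Matrix (Fin n) (Fin n) ℂ) - a)⁻¹) * b
        = (s - Complex.I * w) • (c * (s • (1 : Matrix (Fin n) (Fin n) ℂ) - a)⁻¹ * b) := by
      rw [Matrix.mul_smul, Matrix.smul_mul]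
    rw [e3, ← smul_sub, ← smul_sub, add_sub_cancel_right, smul_neg, smul_smul, smul_neg,
      smul_smul, smul_smul, ← neg_smul]
    congr 1
    field_simp
    rw [Complex.I_sq]; ring
  have hca : ∀ x, star (a *ᵥ x) = a *ᵥ star x := fun x => ha ▸ star_mulVec_map A x
  have hcb : ∀ x, star (b *ᵥ x) = b *ᵥ star x := fun x => hb ▸ star_mulVec_map Bh x
  have hcc : ∀ x, star (c *ᵥ x) = c *ᵥ star x := fun x => hc ▸ star_mulVec_map C x
  have hconjI : ∀ w : ℝ, star (Complex.I * (w : ℂ)) = Complex.I * ((-w : ℝ) : ℂ) := by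
    intro w
    rw [star_mul]; simp; ring
  have hfdi : ∀ (x : Fin n → ℂ) (u : Fin m → ℂ) (w : ℝ),
      a *ᵥ x + b *ᵥ u = (Complex.I * w) • x → 0 ≤ (star u ⬝ᵥ (c *ᵥ x)).re := by
    intro x u w hx
    rcases le_total 0 w with hw | hw
    · exact fdi_nonneg a b c _ O hQ hO hau H1 H2 x u w hw hx
    · have hx2 : a *ᵥ star x + b *ᵥ star u = (Complex.I * ((-w : ℝ) : ℂ)) • star x := by
        rw [← hca, ← hcb, ← star_add, hx, star_smul, hconjI]
      have := fdi_nonneg a b c _ O hQ hO hau H1 H2 (star x) (star u) (-w) (by linarith) hx2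
      have e : star (star u) ⬝ᵥ (c *ᵥ star x) = star (star u ⬝ᵥ (c *ᵥ x)) := by
        rw [← star_dotProduct, hcc, star_star, dotProduct_comm]
      rw [e] at this
      simpa using this
  obtain ⟨P0, hP0h, hP0N, hP0b⟩ := kyp_exists a b c _ hQ hfdi
  rw [ha] at hP0N
  rw [hb, hc] at hP0b
  obtain ⟨S, hSs, hSN, hSB⟩ := real_part_P A Bh C P0 hP0h hP0N hP0b
  obtain ⟨P, hP⟩ : ∃ P, P = S.map Complex.ofReal := ⟨_, rfl⟩
  have hPh : Pᴴ = P := by rw [hP, conjTranspose_map_ofReal, hSs]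
  have hPN : (-(P * a + aᴴ * P)).PosSemidef := by
    have := psd_map _ hSN
    have e : (-(S * A + Aᵀ * S)).map Complex.ofReal = -(P * a + aᴴ * P) := by
      rw [hP, ha, conjTranspose_map_ofReal, ← map_mul_ofReal, ← map_mul_ofReal]
      ext i j; simp
    rwa [e] at this
  have hPb : P * b = cᴴ := by
    rw [hP, hb, hc, ← map_mul_ofReal, hSB, conjTranspose_map_ofReal]
  have hcP : ∀ x, star (P *ᵥ x) = P *ᵥ star x := fun x => hP ▸ star_mulVec_map S x
  have hinj := P_inj a b c O hO P hPh hPN hPb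
  have hpole : ∀ (x : Fin n → ℂ) (w : ℝ), 0 < w → x ≠ 0 → a *ᵥ x = (Complex.I * w) • x →
      0 < (star x ⬝ᵥ (P *ᵥ x)).re := by
    intro x w hw hx0 hx
    have hnu : ¬ IsUnit ((Complex.I * w) • (1 : Matrix (Fin n) (Fin n) ℂ) - a) := by
      intro hu
      apply hx0
      refine mulVec_injective_iff_isUnit.mpr hu ?_
      rw [mulVec_zero, sub_mulVec, smul_mulVec, one_mulVec, hx, sub_self]
    obtain ⟨K, hK, hKp⟩ := H2 w hw hnu
    exact pole_pos a b c _ O hQ hO w K hK hKp P hPh hPN hPb x hx0 hx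
  have himag : ∀ (x : Fin n → ℂ) (w : ℝ), x ≠ 0 → a *ᵥ x = (Complex.I * w) • x →
      0 < (star x ⬝ᵥ (P *ᵥ x)).re := by
    intro x w hx0 hx
    rcases lt_trichotomy 0 w with hw | hw | hw
    · exact hpole x w hw hx0 hx
    · exfalso
      apply hx0
      refine mulVec_injective_iff_isUnit.mpr hau ?_
      rw [hx, ← hw, mulVec_zero]; simp
    · have hx2 : a *ᵥ star x = (Complex.I * ((-w : ℝ) : ℂ)) • star x := by
        rw [← hca, hx, star_smul, hconjI]
      have := hpole (star x) (-w) (by linarith) (fun hh => hx0 (by simpa using hh)) hx2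
      have e : star (star x) ⬝ᵥ (P *ᵥ star x) = star (star x ⬝ᵥ (P *ᵥ x)) := by
        rw [← star_dotProduct, hcP, star_star, dotProduct_comm]
      rw [e] at this
      simpa using this
  have heig : ∀ μ : ℂ, 0 < μ.re → IsUnit (μ • (1 : Matrix (Fin n) (Fin n) ℂ) - a) := by
    intro μ hμ
    rw [ha, ← notMem_eigs]
    intro hh
    exact absurd (h.1 μ hh).2 (not_le.mpr hμ)
  have hpos := lyap_pos a P hPh hPN hinj heig himag
  have hSpos : S.PosDef := by
    apply PosDef.of_dotProduct_mulVec_pos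
    · rw [IsHermitian, conjTranspose_eq_transpose_of_trivial, hSs]
    · intro x hx
      have := hpos (fun i => (x i : ℂ)) (fun hh => hx (by
        funext i
        have := congrFun hh i
        simpa using this))
      have e : (star (fun i => (x i : ℂ)) ⬝ᵥ (P *ᵥ (fun i => (x i : ℂ)))).re
          = star x ⬝ᵥ (S *ᵥ x) := by
        simp [hP, dotProduct, mulVec]
      rwa [e] at this
  have hSd := (Matrix.isUnit_iff_isUnit_det _).mp hSpos.isUnit
  have hSi : S * S⁻¹ = 1 := Matrix.mul_nonsing_inv _ hSd
  have hiS : S⁻¹ * S = 1 := Matrix.nonsing_inv_mul _ hSd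
  have hSit : (S⁻¹)ᵀ = S⁻¹ := by rw [transpose_nonsing_inv, hSs]
  refine ⟨S⁻¹, hSpos.inv, ?_, ?_⟩
  · have h1 := hSN.mul_mul_conjTranspose_same S⁻¹
    rw [conjTranspose_eq_transpose_of_trivial, hSit] at h1
    have e : S⁻¹ * (-(S * A + Aᵀ * S)) * S⁻¹ = -(A * S⁻¹ + S⁻¹ * Aᵀ) := by
      have : S⁻¹ * (-(S * A + Aᵀ * S)) * S⁻¹
          = -((S⁻¹ * S) * A * S⁻¹ + S⁻¹ * Aᵀ * (S * S⁻¹)) := by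
        simp only [Matrix.mul_add, Matrix.add_mul, Matrix.neg_mul, Matrix.mul_neg, Matrix.mul_assoc]
      rw [this, hiS, hSi, Matrix.one_mul, Matrix.mul_one]
    rwa [e] at h1
  · rw [hB, ← hSB, Matrix.mul_assoc A, ← Matrix.mul_assoc S⁻¹, hiS, Matrix.one_mul]
    simp
end

/-- The Negative Imaginary Lemma. -/
theorem negative_imaginary_lemma {n m : ℕ}
    (A : Matrix (Fin n) (Fin n) ℝ) (B : Matrix (Fin n) (Fin m) ℝ)
    (C : Matrix (Fin m) (Fin n) ℝ) (D : Matrix (Fin m) (Fin m) ℝ)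
    (hmin : IsMinimal A B C) :
    IsNI A B C D ↔
      ((A.det ≠ 0 ∧ D = Dᵀ) ∧
        ∃ Y : Matrix (Fin n) (Fin n) ℝ, Y.PosDef ∧
          (-(A * Y + Y * Aᵀ)).PosSemidef ∧ B + A * Y * Cᵀ = 0) := by
  constructor
  · exact ni_forward A B C D hmin
  · rintro ⟨⟨hA, hD⟩, Y, hY, hL, hB⟩
    exact ni_backward A B C D hA hD Y hY hL hB
end
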